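/- arXiv:0908.0443 — 4 statements merged into one kernel-verified Lean document; each statement's English description precedes it below -/
import Mathlib

section
/- Let K be an algebraically closed field. For λ ∈ K let σ_λ be the K-algebra automorphism of the polynomial ring K[a,b,c,d] determined by σ_λ(a) = a + λc, σ_λ(b) = b + λd, σ_λ(c) = c, σ_λ(d) = d. Then the subalgebra of invariants {f ∈ K[a,b,c,d] : σ_λ(f) = f for all λ ∈ K} equals the K-subalgebra generated by c, d and ad − bc. -/
open MvPolynomial

/-!
Write `Δ = ad - bc`. An invariant divisible by `a` is divisible by every translate `a + λc` of `a`;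
as there are infinitely many of these, it is zero. Modulo `a` we have `cb = -Δ`, so a power of `c`
moves any `f` into `R[c, d, Δ] + (a)`; when `f` is invariant, the error term in `(a)` is an
invariant and hence vanishes, so `c ^ n * f ∈ R[c, d, Δ]`.

To cancel `c`, use the column operations `a ↦ a + λb`, `c ↦ c + λd`, which fix `d` and `Δ`: by the
same argument, an element of `R[d, Δ]` divisible by `c` is zero.
-/

section Adjoin

variable {R A : Type*} [CommRing R] [CommRing A] [Algebra R A] {x : A} {S : Set A}

lemma exists_eq_mul_add_of_mem_adjoin_insert {p : A} (hp : p ∈ Algebra.adjoin R (insert x S)) :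
    ∃ q ∈ Algebra.adjoin R (insert x S), ∃ s ∈ Algebra.adjoin R S, p = x * q + s := by
  have adjoin_le : Algebra.adjoin R S ≤ Algebra.adjoin R (insert x S) :=
    Algebra.adjoin_mono (Set.subset_insert x S)
  induction hp using Algebra.adjoin_induction with
  | mem y hy =>
    rcases hy with rfl | hy
    · exact ⟨1, one_mem _, 0, zero_mem _, by ring⟩
    · exact ⟨0, zero_mem _, y, Algebra.subset_adjoin hy, by ring⟩
  | algebraMap r => exact ⟨0, zero_mem _, algebraMap R A r, algebraMap_mem _ r, by ring⟩
  | add p₁ p₂ _ _ ih₁ ih₂ =>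
    obtain ⟨q₁, hq₁, s₁, hs₁, rfl⟩ := ih₁
    obtain ⟨q₂, hq₂, s₂, hs₂, rfl⟩ := ih₂
    exact ⟨q₁ + q₂, add_mem hq₁ hq₂, s₁ + s₂, add_mem hs₁ hs₂, by ring⟩
  | mul p₁ p₂ _ hp₂ ih₁ ih₂ =>
    obtain ⟨q₁, hq₁, s₁, hs₁, rfl⟩ := ih₁
    obtain ⟨q₂, hq₂, s₂, hs₂, rfl⟩ := ih₂
    exact ⟨q₁ * (x * q₂ + s₂) + s₁ * q₂,
      add_mem (mul_mem hq₁ hp₂) (mul_mem (adjoin_le hs₁) hq₂), s₁ * s₂, mul_mem hs₁ hs₂, by ring⟩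

lemma mem_adjoin_insert_of_pow_mul_mem (hx : IsLeftRegular x)
    (hS : ∀ s ∈ Algebra.adjoin R S, x ∣ s → s = 0) (n : ℕ) {p : A}
    (hp : x ^ n * p ∈ Algebra.adjoin R (insert x S)) : p ∈ Algebra.adjoin R (insert x S) := by
  induction n with
  | zero => simpa only [pow_zero, one_mul] using hp
  | succ n ih =>
    obtain ⟨q, hq, s, hs, h⟩ := exists_eq_mul_add_of_mem_adjoin_insert hp
    rw [pow_succ', mul_assoc] at h
    have hs_zero : s = 0 :=
      hS s hs ((dvd_add_right (dvd_mul_right x q)).mp (h ▸ dvd_mul_right x _))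
    rw [hs_zero, add_zero] at h
    exact ih (hx h ▸ hq)

end Adjoin

section Translates

variable {R σ : Type*} [CommRing R] [IsDomain R] [Infinite R] {i j : σ} {p : MvPolynomial σ R}

lemma eq_zero_of_forall_X_add_C_mul_X_dvd (hij : i ≠ j) (hp : ∀ r : R, X i + C r * X j ∣ p) :
    p = 0 := by
  classical
  -- `toPoly` regards `p` as a polynomial in `X i`; its roots then include all `-r * X j`.
  let toPoly : MvPolynomial σ R →ₐ[R] Polynomial (MvPolynomial σ R) :=
    aeval (Function.update (fun k => Polynomial.C (X k)) i Polynomial.X)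
  have aeval_comp_toPoly :
      ((Polynomial.aeval (X i : MvPolynomial σ R)).restrictScalars R).comp toPoly =
        AlgHom.id R _ := by
    refine MvPolynomial.algHom_ext fun k => ?_
    obtain rfl | hk := eq_or_ne k i
    · simp [toPoly]
    · simp [toPoly, hk]
  have isRoot (r : R) : (toPoly p).IsRoot (-(C r * X j)) := by
    have toPoly_translate :
        toPoly (X i + C r * X j) = Polynomial.X - Polynomial.C (-(C r * X j)) := by
      simp [toPoly, hij.symm, Polynomial.algebraMap_apply, algebraMap_eq]
    rw [← Polynomial.dvd_iff_isRoot, ← toPoly_translate]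
    exact map_dvd toPoly (hp r)
  have root_injective : Function.Injective fun r : R => -(C r * X j : MvPolynomial σ R) :=
    fun r s h => C_injective σ R (mul_right_cancel₀ (X_ne_zero j) (neg_injective h))
  have toPoly_eq_zero : toPoly p = 0 :=
    Polynomial.eq_zero_of_infinite_isRoot _
      ((Set.infinite_range_of_injective root_injective).mono (Set.range_subset_iff.mpr isRoot))
  calc p = Polynomial.aeval (X i) (toPoly p) := (DFunLike.congr_fun aeval_comp_toPoly p).symm
    _ = 0 := by rw [toPoly_eq_zero, map_zero]

lemma eq_zero_of_X_dvd_of_forall_apply_eq_self (hij : i ≠ j)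
    (φ : R → MvPolynomial σ R →ₐ[R] MvPolynomial σ R)
    (hφ : ∀ r, φ r (X i) = X i + C r * X j) (hp : ∀ r, φ r p = p) (hdvd : X i ∣ p) : p = 0 :=
  eq_zero_of_forall_X_add_C_mul_X_dvd hij fun r => by
    simpa only [hφ, hp] using map_dvd (φ r) hdvd

end Translates

section Matrices

variable {R : Type*} [CommRing R]

lemma exists_X_zero_dvd_X_two_pow_mul_sub (f : MvPolynomial (Fin 4) R) :
    ∃ n : ℕ, ∃ p ∈ Algebra.adjoin R
      ({X 2, X 3, X 0 * X 3 - X 1 * X 2} : Set (MvPolynomial (Fin 4) R)),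
      X 0 ∣ X 2 ^ n * f - p := by
  set B := Algebra.adjoin R ({X 2, X 3, X 0 * X 3 - X 1 * X 2} : Set (MvPolynomial (Fin 4) R))
  have c_mem : X 2 ∈ B := Algebra.subset_adjoin (by simp)
  have d_mem : X 3 ∈ B := Algebra.subset_adjoin (by simp)
  have det_mem : X 0 * X 3 - X 1 * X 2 ∈ B := Algebra.subset_adjoin (by simp)
  induction f using MvPolynomial.induction_on with
  | C r => exact ⟨0, C r, algebraMap_mem B r, by simp⟩
  | add f g hf hg =>
    obtain ⟨m, p, hp, u, hu⟩ := hf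
    obtain ⟨n, q, hq, v, hv⟩ := hg
    refine ⟨m + n, X 2 ^ n * p + X 2 ^ m * q, add_mem (mul_mem (pow_mem c_mem n) hp)
      (mul_mem (pow_mem c_mem m) hq), X 2 ^ n * u + X 2 ^ m * v, ?_⟩
    linear_combination X 2 ^ n * hu + X 2 ^ m * hv
  | mul_X f i hf =>
    obtain ⟨n, p, hp, u, hu⟩ := hf
    fin_cases i <;> dsimp only [Fin.reduceFinMk, Fin.zero_eta, Fin.mk_one]
    · exact ⟨n, 0, zero_mem B, X 2 ^ n * f, by ring⟩
    · refine ⟨n + 1, -(p * (X 0 * X 3 - X 1 * X 2)), neg_mem (mul_mem hp det_mem),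
        X 1 * X 2 * u + p * X 3, ?_⟩
      linear_combination X 1 * X 2 * hu
    · refine ⟨n, p * X 2, mul_mem hp c_mem, u * X 2, ?_⟩
      linear_combination X 2 * hu
    · refine ⟨n, p * X 3, mul_mem hp d_mem, u * X 3, ?_⟩
      linear_combination X 3 * hu

lemma aeval_rowOperation_eq_self_of_mem_adjoin (r : R) {f : MvPolynomial (Fin 4) R}
    (hf : f ∈ Algebra.adjoin R
      ({X 2, X 3, X 0 * X 3 - X 1 * X 2} : Set (MvPolynomial (Fin 4) R))) :
    aeval ![X 0 + C r * X 2, X 1 + C r * X 3, X 2, X 3] f = f := by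
  refine AlgHom.adjoin_le_equalizer _ (AlgHom.id R _) ?_ hf
  rintro _ (rfl | rfl | rfl)
  · simp
  · simp
  · simp only [map_sub, map_mul, aeval_X, Matrix.cons_val, AlgHom.id_apply]
    ring

lemma aeval_columnOperation_eq_self_of_mem_adjoin (r : R) {f : MvPolynomial (Fin 4) R}
    (hf : f ∈ Algebra.adjoin R
      ({X 3, X 0 * X 3 - X 1 * X 2} : Set (MvPolynomial (Fin 4) R))) :
    aeval ![X 0 + C r * X 1, X 1, X 2 + C r * X 3, X 3] f = f := by
  refine AlgHom.adjoin_le_equalizer _ (AlgHom.id R _) ?_ hf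
  rintro _ (rfl | rfl)
  · simp
  · simp only [map_sub, map_mul, aeval_X, Matrix.cons_val, AlgHom.id_apply]
    ring

variable [IsDomain R] [Infinite R]

lemma eq_zero_of_mem_adjoin_of_X_two_dvd {f : MvPolynomial (Fin 4) R}
    (hf : f ∈ Algebra.adjoin R
      ({X 3, X 0 * X 3 - X 1 * X 2} : Set (MvPolynomial (Fin 4) R)))
    (hdvd : X 2 ∣ f) : f = 0 :=
  eq_zero_of_X_dvd_of_forall_apply_eq_self (i := 2) (j := 3) (by decide)
    (fun r => aeval ![X 0 + C r * X 1, X 1, X 2 + C r * X 3, X 3]) (fun r => by simp)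
    (fun r => aeval_columnOperation_eq_self_of_mem_adjoin r hf) hdvd

theorem invariants_of_unipotent_action_on_matrices_general (f : MvPolynomial (Fin 4) R) :
    (∀ r : R,
        aeval ![X 0 + C r * X 2, X 1 + C r * X 3, X 2, X 3] f = f) ↔
      f ∈ Algebra.adjoin R
        ({X 2, X 3, X 0 * X 3 - X 1 * X 2} : Set (MvPolynomial (Fin 4) R)) := by
  refine ⟨fun hf => ?_, fun hf r => aeval_rowOperation_eq_self_of_mem_adjoin r hf⟩
  obtain ⟨n, p, hp, hdvd⟩ := exists_X_zero_dvd_X_two_pow_mul_sub f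
  have error_eq_zero : X 2 ^ n * f - p = 0 :=
    eq_zero_of_X_dvd_of_forall_apply_eq_self (i := 0) (j := 2) (by decide)
      (fun r => aeval ![X 0 + C r * X 2, X 1 + C r * X 3, X 2, X 3]) (fun r => by simp)
      (fun r => by
        simp only [map_sub, map_mul, map_pow, aeval_X, hf r,
          aeval_rowOperation_eq_self_of_mem_adjoin r hp, Matrix.cons_val])
      hdvd
  rw [← sub_eq_zero.mp error_eq_zero] at hp
  exact mem_adjoin_insert_of_pow_mul_mem (IsRegular.of_ne_zero (X_ne_zero 2)).left
    (fun _ => eq_zero_of_mem_adjoin_of_X_two_dvd) n hp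

end Matrices

/-- **Invariants of the unipotent action on 2×2 matrices (Example 4.1).**
Over an algebraically closed field `K`, consider the `K`-algebra endomorphism
`σ_λ` of `K[a,b,c,d]` (variables `X 0 = a`, `X 1 = b`, `X 2 = c`, `X 3 = d`)
with `σ_λ(a) = a + λc`, `σ_λ(b) = b + λd`, `σ_λ(c) = c`, `σ_λ(d) = d`.
A polynomial is fixed by all `σ_λ` iff it lies in the `K`-subalgebra generated
by `c`, `d` and `ad - bc`. -/
theorem invariants_of_unipotent_action_on_matrices
    (K : Type*) [Field K] [IsAlgClosed K] (f : MvPolynomial (Fin 4) K) :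
    (∀ l : K,
        aeval ![X 0 + C l * X 2, X 1 + C l * X 3, X 2, X 3] f = f) ↔
      f ∈ Algebra.adjoin K
        ({X 2, X 3, X 0 * X 3 - X 1 * X 2} : Set (MvPolynomial (Fin 4) K)) := by
  have : Infinite K := IsAlgClosed.instInfinite
  exact invariants_of_unipotent_action_on_matrices_general f
end

section
/- With τ_λ as above (the ℂ-algebra automorphism of ℂ[x₁,x₂,x₃,x₄] with τ_λ(x₁) = x₁, τ_λ(x₂) = x₂ + λx₁, τ_λ(x₃) = x₃ + λx₂ + (1/2)λ²x₁, τ_λ(x₄) = x₄ + λ(x₂² − 2x₁x₃ − 1)), the algebra of invariants {f : τ_λ(f) = f for all λ ∈ ℂ} is generated as a ℂ-algebra by f₁ = x₁, f₂ = x₂² − 2x₁x₃, f₃ = x₁x₄ − x₂(x₂² − 2x₁x₃ − 1), and the polynomial f₄ with f₁·f₄ = f₃² − f₂(1−f₂)². -/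
/-!
The function `x₂` is a local slice: `τ_λ` translates it by `λx₁`, and after inverting `f₁ = x₁`
the polynomial ring is generated by `x₂` over `A = ℂ[f₁, f₂, f₃, f₄]`. A polynomial in `x₂` over `A`
that is unchanged by infinitely many translations is constant, so `f₁ⁿ f ∈ A` for some `n` whenever
`f` is invariant.

It remains to divide by `f₁` inside `A`. The relation `f₃² = f₁f₄ + f₂(1 - f₂)²` puts every element
of `A` into the form `f₁a + p + f₃q` with `a ∈ A` and `p, q ∈ ℂ[f₂, f₄]`. If such an element is
divisible by `f₁`, the involution `x₂ ↦ -x₂`, `x₄ ↦ -x₄`, which fixes `f₁, f₂, f₄` and negates `f₃`,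
shows that `f₁` divides both `p` and `q`. Since `f₂` and `f₄` stay algebraically independent on
`x₁ = 0`, this forces `p = q = 0`.
-/

open MvPolynomial

/-- The comorphism `τ_λ` of Winkelmann's additive group action on `ℂ⁴`:
`x₁ ↦ x₁`, `x₂ ↦ x₂ + λx₁`, `x₃ ↦ x₃ + λx₂ + (1/2)λ²x₁`,
`x₄ ↦ x₄ + λ(x₂² - 2x₁x₃ - 1)` (variables `X 0, X 1, X 2, X 3`). -/
noncomputable def winkTau (l : ℂ) :
    MvPolynomial (Fin 4) ℂ →ₐ[ℂ] MvPolynomial (Fin 4) ℂ :=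
  aeval ![X 0, X 1 + C l * X 0,
          X 2 + C l * X 1 + C ((1/2) * l^2) * X 0,
          X 3 + C l * (X 1 ^ 2 - 2 * X 0 * X 2 - 1)]

/-- `f₁ = x₁`. -/
noncomputable def winkF₁ : MvPolynomial (Fin 4) ℂ := X 0

/-- `f₂ = x₂² - 2x₁x₃`. -/
noncomputable def winkF₂ : MvPolynomial (Fin 4) ℂ := X 1 ^ 2 - 2 * X 0 * X 2

/-- `f₃ = x₁x₄ - x₂(x₂² - 2x₁x₃ - 1)`. -/
noncomputable def winkF₃ : MvPolynomial (Fin 4) ℂ :=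
  X 0 * X 3 - X 1 * (X 1 ^ 2 - 2 * X 0 * X 2 - 1)

section Saturation

variable {k R : Type*} [CommSemiring k] [CommSemiring R] [Algebra k R]

lemma saturation_powers_eq_self {A : Subalgebra k R} {a : R} (ha : a ∈ A)
    (h : ∀ r, a * r ∈ A → r ∈ A) :
    A.saturation (Submonoid.powers a) (Submonoid.powers_le.2 ha) = A := by
  refine le_antisymm ?_ Subalgebra.le_saturation
  rintro r ⟨_, ⟨n, rfl⟩, hr⟩
  change a ^ n * r ∈ A at hr
  induction n with
  | zero => simpa using hr
  | succ n ih => exact ih (h _ (by rwa [← mul_assoc, ← pow_succ']))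

lemma exists_mul_mem_of_forall_X {σ : Type*} {B : Subalgebra k (MvPolynomial σ k)}
    {M : Submonoid (MvPolynomial σ k)} (hM : M ≤ B.toSubmonoid) (hX : ∀ i, ∃ m ∈ M, m * X i ∈ B)
    (f : MvPolynomial σ k) : ∃ m ∈ M, m * f ∈ B := by
  have htop : B.saturation M hM = ⊤ := by
    rw [eq_top_iff, ← adjoin_range_X, Algebra.adjoin_le_iff]
    exact Set.range_subset_iff.2 hX
  exact htop.ge Algebra.mem_top

lemma exists_eq_mul_add_of_mem_adjoin_insert_s8 {x g : R} {S : Set R}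
    (hg : g ∈ Algebra.adjoin k (insert x S)) :
    ∃ a ∈ Algebra.adjoin k (insert x S), ∃ b ∈ Algebra.adjoin k S, g = x * a + b := by
  have hS : Algebra.adjoin k S ≤ Algebra.adjoin k (insert x S) :=
    Algebra.adjoin_mono (Set.subset_insert x S)
  induction hg using Algebra.adjoin_induction with
  | mem y hy =>
    rcases hy with rfl | hy
    · exact ⟨1, one_mem _, 0, zero_mem _, by simp⟩
    · exact ⟨0, zero_mem _, y, Algebra.subset_adjoin hy, by simp⟩
  | algebraMap r => exact ⟨0, zero_mem _, _, Subalgebra.algebraMap_mem _ r, by simp⟩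
  | add _ _ _ _ hy hz =>
    obtain ⟨a, ha, b, hb, rfl⟩ := hy
    obtain ⟨c, hc, d, hd, rfl⟩ := hz
    exact ⟨a + c, add_mem ha hc, b + d, add_mem hb hd, by ring⟩
  | mul _ z _ hz' hy hz =>
    obtain ⟨a, ha, b, hb, rfl⟩ := hy
    obtain ⟨c, hc, d, hd, rfl⟩ := hz
    exact ⟨a * (x * c + d) + b * c, add_mem (mul_mem ha hz') (mul_mem (hS hb) hc),
      b * d, mul_mem hb hd, by ring⟩

end Saturation

/-- Writing `h = Q(s)`, the polynomial `Q` takes the value `h` at each of the infinitely many points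
`φ i s`, so it is constant. -/
lemma mem_range_algebraMap_of_fixed_of_mem_adjoin_singleton {A R ι : Type*} [CommSemiring A]
    [CommRing R] [IsDomain R] [Algebra A R] [Infinite ι] {φ : ι → R →ₐ[A] R} {s h : R}
    (hs : Function.Injective fun i => φ i s) (hh : h ∈ Algebra.adjoin A {s})
    (hfix : ∀ i, φ i h = h) : h ∈ Set.range (algebraMap A R) := by
  obtain ⟨Q, rfl⟩ := Algebra.adjoin_mem_exists_aeval A s hh
  have hroot (i : ι) : (Q.map (algebraMap A R)).eval (φ i s) = Polynomial.aeval s Q := by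
    rw [Polynomial.eval_map_algebraMap, Polynomial.aeval_algHom_apply, hfix]
  have hconst : Q.map (algebraMap A R) = Polynomial.C (Polynomial.aeval s Q) :=
    Polynomial.eq_of_infinite_eval_eq _ _ <| (Set.infinite_range_of_injective hs).mono <| by
      rintro _ ⟨i, rfl⟩
      simpa using hroot i
  exact ⟨Q.coeff 0, by simpa using congrArg (Polynomial.coeff · 0) hconst⟩

lemma mem_saturation_of_fixed_of_slice {k R ι : Type*} [CommSemiring k] [CommRing R] [IsDomain R]
    [Algebra k R] [Infinite ι] {A : Subalgebra k R} {M : Submonoid R} (hM : M ≤ A.toSubmonoid)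
    {φ : ι → R →ₐ[k] R} (hA : ∀ i, ∀ a ∈ A, φ i a = a) {s f : R}
    (hs : Function.Injective fun i => φ i s) (hslice : ∃ m ∈ M, m * f ∈ Algebra.adjoin A {s})
    (hfix : ∀ i, φ i f = f) : f ∈ A.saturation M hM := by
  obtain ⟨m, hm, hmf⟩ := hslice
  let ψ (i : ι) : R →ₐ[A] R := { φ i with commutes' := fun a => hA i a a.2 }
  have hψ (i : ι) : ψ i (m * f) = m * f := by
    change φ i (m * f) = m * f
    rw [map_mul, hA i m (hM hm), hfix]
  obtain ⟨a, ha⟩ := mem_range_algebraMap_of_fixed_of_mem_adjoin_singleton (φ := ψ) hs hmf hψ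
  exact ⟨m, hm, ha ▸ a.2⟩

lemma exists_eq_sq_sub_mul_add_of_mem_adjoin_singleton {k R : Type*} [CommRing k]
    [CommRing R] [Algebra k R] (c : k) {s g : R} (hg : g ∈ Algebra.adjoin k {s}) :
    ∃ u ∈ Algebra.adjoin k {s}, ∃ p q : k,
      g = (s ^ 2 - algebraMap k R c) * u + (algebraMap k R p + s * algebraMap k R q) := by
  rcases subsingleton_or_nontrivial k with _ | _
  · have := Module.subsingleton k R
    exact ⟨0, zero_mem _, 0, 0, Subsingleton.elim _ _⟩
  obtain ⟨Q, rfl⟩ := Algebra.adjoin_mem_exists_aeval k s hg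
  set m := Polynomial.X ^ 2 - Polynomial.C c with hm_def
  have hm : m.Monic := Polynomial.monic_X_pow_sub_C c two_ne_zero
  have hm_deg : m.natDegree = 2 := Polynomial.natDegree_X_pow_sub_C
  have hm_ne : m ≠ 1 := fun h => by simp [h] at hm_deg
  have hdeg : (Q %ₘ m).natDegree ≤ 1 :=
    Nat.le_of_lt_succ <| (Polynomial.natDegree_modByMonic_lt Q hm hm_ne).trans_eq hm_deg
  obtain ⟨q, p, hqp⟩ := Polynomial.exists_eq_X_add_C_of_natDegree_le_one hdeg
  refine ⟨Polynomial.aeval s (Q /ₘ m), Polynomial.aeval_mem_adjoin_singleton _ _, p, q, ?_⟩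
  conv_lhs => rw [← Polynomial.modByMonic_add_div Q m, hqp]
  simp only [hm_def, map_add, map_mul, map_sub, map_pow, Polynomial.aeval_X, Polynomial.aeval_C]
  ring

/-- Apply `σ` to `π ∣ p + s * q` and take the sum and the difference. -/
lemma dvd_and_dvd_of_dvd_add_mul_of_map_eq_neg {R : Type*} [CommRing R] {π s p q : R}
    (hπ : Prime π) (h₂ : ¬π ∣ 2) (hs : ¬π ∣ s) (σ : R →+* R) (hσπ : σ π = π) (hσs : σ s = -s)
    (hσp : σ p = p) (hσq : σ q = q) (h : π ∣ p + s * q) : π ∣ p ∧ π ∣ q := by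
  have h' : π ∣ p - s * q := by
    simpa [hσπ, hσs, hσp, hσq, sub_eq_add_neg] using map_dvd σ h
  have hp : π ∣ 2 * p := by convert dvd_add h h' using 1; ring
  have hq : π ∣ 2 * (s * q) := by convert dvd_sub h h' using 1; ring
  exact ⟨(hπ.dvd_or_dvd hp).resolve_left h₂,
    (hπ.dvd_or_dvd ((hπ.dvd_or_dvd hq).resolve_left h₂)).resolve_left hs⟩

lemma two_mul_C_half {k σ : Type*} [Field k] [NeZero (2 : k)] :
    (2 : MvPolynomial σ k) * C (1 / 2) = 1 := by
  rw [← map_ofNat C, ← C_mul, mul_one_div_cancel two_ne_zero, C_1]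

/-- The fourth generator `f₄`, obtained by dividing `f₃² - f₂(1 - f₂)²` by `f₁`. -/
noncomputable def winkF₄ : MvPolynomial (Fin 4) ℂ :=
  X 0 * X 3 ^ 2 - 2 * X 1 * X 3 * (winkF₂ - 1) + 2 * X 2 * (winkF₂ - 1) ^ 2

lemma winkF₁_ne_zero : winkF₁ ≠ 0 := X_ne_zero _

lemma prime_winkF₁ : Prime winkF₁ := X_prime

lemma winkF₁_mul_winkF₄ : winkF₁ * winkF₄ = winkF₃ ^ 2 - winkF₂ * (1 - winkF₂) ^ 2 := by
  simp only [winkF₁, winkF₂, winkF₃, winkF₄]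
  ring

/-- The subalgebra `ℂ[f₁, f₂, f₃, f₄]`, to be identified with the ring of invariants. -/
noncomputable def winkAlgebra : Subalgebra ℂ (MvPolynomial (Fin 4) ℂ) :=
  Algebra.adjoin ℂ {winkF₁, winkF₂, winkF₃, winkF₄}

lemma winkF₁_mem_winkAlgebra : winkF₁ ∈ winkAlgebra := Algebra.subset_adjoin (by simp)

lemma winkF₂_mem_winkAlgebra : winkF₂ ∈ winkAlgebra := Algebra.subset_adjoin (by simp)

lemma winkF₃_mem_winkAlgebra : winkF₃ ∈ winkAlgebra := Algebra.subset_adjoin (by simp)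

lemma winkF₄_mem_winkAlgebra : winkF₄ ∈ winkAlgebra := Algebra.subset_adjoin (by simp)

section Invariance

variable (l : ℂ)

lemma winkTau_winkF₁ : winkTau l winkF₁ = winkF₁ := by
  simp [winkTau, winkF₁]

lemma winkTau_winkF₂ : winkTau l winkF₂ = winkF₂ := by
  simp only [winkTau, winkF₂, map_sub, map_mul, map_pow, map_ofNat, aeval_X, Matrix.cons_val]
  linear_combination (-(C l) ^ 2 * X 0 ^ 2) * two_mul_C_half (k := ℂ)

lemma winkTau_winkF₃ : winkTau l winkF₃ = winkF₃ := by
  have hF₃ : winkF₃ = X 0 * X 3 - X 1 * (winkF₂ - 1) := rfl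
  rw [hF₃, map_sub, map_mul, map_mul, map_sub, winkTau_winkF₂, map_one]
  simp only [winkTau, winkF₂, aeval_X, Matrix.cons_val]
  ring

lemma winkTau_winkF₄ : winkTau l winkF₄ = winkF₄ := by
  refine mul_left_cancel₀ winkF₁_ne_zero ?_
  have h := congrArg (winkTau l) winkF₁_mul_winkF₄
  simp only [map_mul, map_sub, map_pow, map_one, winkTau_winkF₁, winkTau_winkF₂,
    winkTau_winkF₃] at h
  exact h.trans winkF₁_mul_winkF₄.symm

lemma winkTau_eq_self_of_mem_winkAlgebra {f : MvPolynomial (Fin 4) ℂ} (hf : f ∈ winkAlgebra) :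
    winkTau l f = f := by
  suffices winkAlgebra ≤ AlgHom.equalizer (winkTau l) (AlgHom.id ℂ _) from this hf
  refine Algebra.adjoin_le ?_
  rintro _ (rfl | rfl | rfl | rfl)
  exacts [winkTau_winkF₁ l, winkTau_winkF₂ l, winkTau_winkF₃ l, winkTau_winkF₄ l]

end Invariance

lemma winkTau_X_one_injective : Function.Injective fun l => winkTau l (X 1) := by
  intro l m h
  simpa [winkTau, X_ne_zero] using h

/-- Up to powers of `f₁`, the relations defining `f₂` and `f₃` express `x₃` and `x₄` in terms of
`f₁, f₂, f₃` and the slice coordinate `x₂`. -/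
lemma exists_pow_mul_mem_adjoin_X_one (f : MvPolynomial (Fin 4) ℂ) :
    ∃ m ∈ Submonoid.powers winkF₁, m * f ∈ Algebra.adjoin winkAlgebra {X 1} := by
  set B : Subalgebra winkAlgebra (MvPolynomial (Fin 4) ℂ) := Algebra.adjoin winkAlgebra {X 1}
  have hB {a : MvPolynomial (Fin 4) ℂ} (ha : a ∈ winkAlgebra) : a ∈ B := B.algebraMap_mem ⟨a, ha⟩
  have hX₁ : X 1 ∈ B := Algebra.self_mem_adjoin_singleton _ _
  have hX₂ : winkF₁ * X 2 = C (1 / 2) * (X 1 ^ 2 - winkF₂) := by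
    simp only [winkF₁, winkF₂]
    linear_combination (-X 0 * X 2) * two_mul_C_half (k := ℂ)
  have hX₃ : winkF₁ * X 3 = winkF₃ + X 1 * (winkF₂ - 1) := by
    simp only [winkF₁, winkF₂, winkF₃]
    ring
  refine exists_mul_mem_of_forall_X (B := B.restrictScalars ℂ)
    (Submonoid.powers_le.2 (hB winkF₁_mem_winkAlgebra)) (fun i => ?_) f
  fin_cases i
  · exact ⟨1, one_mem _, (one_mul winkF₁).symm ▸ hB winkF₁_mem_winkAlgebra⟩
  · exact ⟨1, one_mem _, (one_mul (X 1 : MvPolynomial (Fin 4) ℂ)).symm ▸ hX₁⟩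
  · exact ⟨winkF₁, Submonoid.mem_powers _, hX₂ ▸ mul_mem (hB (winkAlgebra.algebraMap_mem _))
      (sub_mem (pow_mem hX₁ 2) (hB winkF₂_mem_winkAlgebra))⟩
  · exact ⟨winkF₁, Submonoid.mem_powers _, hX₃ ▸ add_mem (hB winkF₃_mem_winkAlgebra)
      (mul_mem hX₁ (sub_mem (hB winkF₂_mem_winkAlgebra) (one_mem _)))⟩

lemma exists_normal_form_of_mem_winkAlgebra {g : MvPolynomial (Fin 4) ℂ} (hg : g ∈ winkAlgebra) :
    ∃ a ∈ winkAlgebra, ∃ p ∈ Algebra.adjoin ℂ {winkF₂, winkF₄},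
      ∃ q ∈ Algebra.adjoin ℂ {winkF₂, winkF₄}, g = winkF₁ * a + (p + winkF₃ * q) := by
  obtain ⟨a, ha, b, hb, rfl⟩ := exists_eq_mul_add_of_mem_adjoin_insert_s8 hg
  have hsub : Algebra.adjoin ℂ {winkF₂, winkF₃, winkF₄} ≤ winkAlgebra :=
    Algebra.adjoin_mono (Set.subset_insert _ _)
  have hset : ({winkF₂, winkF₃, winkF₄} : Set (MvPolynomial (Fin 4) ℂ)) =
      {winkF₂, winkF₄} ∪ {winkF₃} := by grind
  have hadjoin := congrArg (Algebra.adjoin ℂ) hset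
  rw [Algebra.adjoin_union_eq_adjoin_adjoin] at hadjoin
  rw [hadjoin] at hb hsub
  have hF₂ : winkF₂ ∈ Algebra.adjoin ℂ {winkF₂, winkF₄} := Algebra.subset_adjoin (by simp)
  obtain ⟨u, hu, p, q, rfl⟩ := exists_eq_sq_sub_mul_add_of_mem_adjoin_singleton
    (⟨winkF₂, hF₂⟩ * (1 - ⟨winkF₂, hF₂⟩) ^ 2 : Algebra.adjoin ℂ {winkF₂, winkF₄}) hb
  refine ⟨a + winkF₄ * u, add_mem ha (mul_mem winkF₄_mem_winkAlgebra (hsub hu)), p, p.2, q, q.2, ?_⟩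
  simp only [map_mul, map_sub, map_pow, map_one, Subalgebra.algebraMap_def]
  linear_combination (-u) * winkF₁_mul_winkF₄

lemma not_winkF₁_dvd_of_eval_ne_zero {f : MvPolynomial (Fin 4) ℂ} {x : Fin 4 → ℂ} (hx : x 0 = 0)
    (hf : eval x f ≠ 0) : ¬winkF₁ ∣ f := by
  rintro ⟨g, rfl⟩
  simp [winkF₁, hx] at hf

lemma exists_eval_winkF₂_eq_and_eval_winkF₄_eq {u : ℂ} (hu : u ≠ 1) (t : ℂ) :
    ∃ x : Fin 4 → ℂ, x 0 = 0 ∧ eval x winkF₂ = u ∧ eval x winkF₄ = t := by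
  obtain ⟨s, rfl⟩ := IsAlgClosed.exists_pow_nat_eq u two_pos
  have hs : s ^ 2 - 1 ≠ 0 := sub_ne_zero.2 hu
  have hF₂ (r : ℂ) : eval ![0, s, r, 0] winkF₂ = s ^ 2 := by simp [winkF₂]
  refine ⟨![0, s, t / (2 * (s ^ 2 - 1) ^ 2), 0], rfl, hF₂ _, ?_⟩
  simp only [winkF₄, map_add, map_sub, map_mul, map_pow, map_one, map_ofNat, eval_X, hF₂,
    Matrix.cons_val]
  field_simp
  ring

/-- `f₂` and `f₄` are algebraically independent modulo `f₁`, because `(f₂, f₄)` maps the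
hyperplane `x₁ = 0` onto a Zariski dense set. -/
lemma eq_zero_of_mem_adjoin_of_winkF₁_dvd {p : MvPolynomial (Fin 4) ℂ}
    (hp : p ∈ Algebra.adjoin ℂ {winkF₂, winkF₄}) (hdvd : winkF₁ ∣ p) : p = 0 := by
  rw [← Matrix.range_cons_cons_empty winkF₂ winkF₄ ![],
    Algebra.adjoin_range_eq_range_aeval] at hp
  obtain ⟨P, rfl⟩ := hp
  suffices P = 0 by rw [this, map_zero]
  refine funext_set ![{1}ᶜ, Set.univ] ?_ fun y hy => ?_
  · exact Fin.forall_fin_two.2 ⟨(Set.finite_singleton 1).infinite_compl, Set.infinite_univ⟩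
  obtain ⟨x, hx₀, hF₂, hF₄⟩ := exists_eval_winkF₂_eq_and_eval_winkF₄_eq (hy 0 trivial) (y 1)
  have hxy : (fun i => aeval x (![winkF₂, winkF₄] i)) = y := by
    ext i
    fin_cases i
    exacts [hF₂, hF₄]
  have hP : eval x (aeval ![winkF₂, winkF₄] P) = eval y P := by
    change aeval x (aeval ![winkF₂, winkF₄] P) = aeval y P
    rw [comp_aeval_apply, hxy]
  rw [map_zero]
  by_contra hne
  exact not_winkF₁_dvd_of_eval_ne_zero hx₀ (hP.trans_ne hne) hdvd

/-- The involution `x₂ ↦ -x₂`, `x₄ ↦ -x₄`, which separates the components of a normal form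
`p + f₃ q` with `p, q ∈ ℂ[f₂, f₄]`. -/
noncomputable def winkInvolution : MvPolynomial (Fin 4) ℂ →ₐ[ℂ] MvPolynomial (Fin 4) ℂ :=
  aeval ![X 0, -X 1, X 2, -X 3]

lemma winkInvolution_winkF₁ : winkInvolution winkF₁ = winkF₁ := by
  simp [winkInvolution, winkF₁]

lemma winkInvolution_winkF₂ : winkInvolution winkF₂ = winkF₂ := by
  simp only [winkInvolution, winkF₂, map_sub, map_mul, map_pow, map_ofNat, aeval_X,
    Matrix.cons_val]
  ring

lemma winkInvolution_winkF₃ : winkInvolution winkF₃ = -winkF₃ := by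
  simp only [winkInvolution, winkF₃, map_sub, map_mul, map_pow, map_one, map_ofNat, aeval_X,
    Matrix.cons_val]
  ring

lemma winkInvolution_winkF₄ : winkInvolution winkF₄ = winkF₄ := by
  simp only [winkF₄, map_add, map_sub, map_mul, map_pow, map_one, map_ofNat, winkInvolution_winkF₂]
  simp [winkInvolution]

lemma winkInvolution_eq_self_of_mem_adjoin {p : MvPolynomial (Fin 4) ℂ}
    (hp : p ∈ Algebra.adjoin ℂ {winkF₂, winkF₄}) : winkInvolution p = p := by
  suffices Algebra.adjoin ℂ {winkF₂, winkF₄} ≤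
    AlgHom.equalizer winkInvolution (AlgHom.id ℂ _) from this hp
  refine Algebra.adjoin_le ?_
  rintro _ (rfl | rfl)
  exacts [winkInvolution_winkF₂, winkInvolution_winkF₄]

lemma mem_winkAlgebra_of_winkF₁_mul_mem (g : MvPolynomial (Fin 4) ℂ)
    (hg : winkF₁ * g ∈ winkAlgebra) : g ∈ winkAlgebra := by
  obtain ⟨a, ha, p, hp, q, hq, h⟩ := exists_normal_form_of_mem_winkAlgebra hg
  have hdvd : winkF₁ ∣ p + winkF₃ * q := ⟨g - a, by linear_combination -h⟩
  have h₂ : ¬winkF₁ ∣ 2 := not_winkF₁_dvd_of_eval_ne_zero (x := 0) rfl <| by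
    rw [map_ofNat]
    exact two_ne_zero
  have h₃ : ¬winkF₁ ∣ winkF₃ :=
    not_winkF₁_dvd_of_eval_ne_zero (x := ![0, 2, 0, 0]) rfl (by norm_num [winkF₃])
  obtain ⟨hdvd_p, hdvd_q⟩ := dvd_and_dvd_of_dvd_add_mul_of_map_eq_neg prime_winkF₁ h₂ h₃
    (winkInvolution : _ →+* _) winkInvolution_winkF₁ winkInvolution_winkF₃
    (winkInvolution_eq_self_of_mem_adjoin hp) (winkInvolution_eq_self_of_mem_adjoin hq) hdvd
  rw [eq_zero_of_mem_adjoin_of_winkF₁_dvd hp hdvd_p,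
    eq_zero_of_mem_adjoin_of_winkF₁_dvd hq hdvd_q, mul_zero, add_zero, add_zero] at h
  exact mul_left_cancel₀ winkF₁_ne_zero h ▸ ha

theorem winkelmann_invariant_algebra_eq_adjoin_general
    (f₄ : MvPolynomial (Fin 4) ℂ)
    (hf₄ : winkF₁ * f₄ = winkF₃ ^ 2 - winkF₂ * (1 - winkF₂) ^ 2)
    (f : MvPolynomial (Fin 4) ℂ) {Λ : Set ℂ} (hΛ : Λ.Infinite) :
    (∀ l ∈ Λ, winkTau l f = f) ↔
      f ∈ Algebra.adjoin ℂ
        ({winkF₁, winkF₂, winkF₃, f₄} : Set (MvPolynomial (Fin 4) ℂ)) := by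
  obtain rfl : f₄ = winkF₄ :=
    mul_left_cancel₀ winkF₁_ne_zero (hf₄.trans winkF₁_mul_winkF₄.symm)
  change _ ↔ f ∈ winkAlgebra
  refine ⟨fun hf => ?_, fun hf l _ => winkTau_eq_self_of_mem_winkAlgebra l hf⟩
  have : Infinite Λ := hΛ.to_subtype
  rw [← saturation_powers_eq_self winkF₁_mem_winkAlgebra mem_winkAlgebra_of_winkF₁_mul_mem]
  exact mem_saturation_of_fixed_of_slice _ (φ := fun l : Λ => winkTau l)
    (fun l _ => winkTau_eq_self_of_mem_winkAlgebra l)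
    (winkTau_X_one_injective.comp Subtype.val_injective)
    (exists_pow_mul_mem_adjoin_X_one f) fun l => hf l l.2

/-- **The invariant algebra of Winkelmann's action is generated by `f₁, f₂, f₃, f₄`:**
a polynomial `f` is fixed by all `τ_λ` iff it lies in the `ℂ`-subalgebra generated by
`f₁, f₂, f₃` and the polynomial `f₄` with `f₁ f₄ = f₃² - f₂(1 - f₂)²`. -/
theorem winkelmann_invariant_algebra_eq_adjoin
    (f₄ : MvPolynomial (Fin 4) ℂ)
    (hf₄ : winkF₁ * f₄ = winkF₃ ^ 2 - winkF₂ * (1 - winkF₂) ^ 2)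
    (f : MvPolynomial (Fin 4) ℂ) :
    (∀ l : ℂ, winkTau l f = f) ↔
      f ∈ Algebra.adjoin ℂ
        ({winkF₁, winkF₂, winkF₃, f₄} : Set (MvPolynomial (Fin 4) ℂ)) := by
  simpa using winkelmann_invariant_algebra_eq_adjoin_general f₄ hf₄ f Set.infinite_univ
end

section
/- Let K be a field of characteristic zero. Consider the polynomial ring R = K[X_{ij} : i ∈ {1,2}, j ∈ {1,2,3}] in the entries of a 2×3 matrix, and for g ∈ SL(2,K) the K-algebra automorphism α_g of R determined by α_g(X_{ij}) = Σ_{l=1}^{2} g_{il} X_{lj}. Then the invariant algebra {f ∈ R : α_g(f) = f for all g ∈ SL(2,K)} is generated as a K-algebra by the three 2×2 minors Δ₁₂ = X₁₁X₂₂ − X₁₂X₂₁, Δ₂₃ = X₁₂X₂₃ − X₁₃X₂₂, and Δ₁₃ = X₁₁X₂₃ − X₁₃X₂₁. -/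
open MvPolynomial Matrix

/-!
On the open set `Δ₁₂ ≠ 0` every matrix `M` is carried by `SL(2)` to the matrix with columns
`(Δ_{j2} / Δ₁₂, Δ_{1j})`, by Cramer's rule. An invariant therefore takes the same value at `M`
as at this normal form, and clearing denominators puts `Δ₁₂ ^ k * f` in the algebra of the minors
for some `k`. To divide by `Δ₁₂`, restrict to the matrices `!![c, b, 0; 0, 0, 1]`, whose minors
`(Δ₁₂, Δ₂₃, Δ₁₃)` are `(0, b, c)`: if `Δ₁₂` divides `P(Δ₁₂, Δ₂₃, Δ₁₃)`, then `P(0, b, c) = 0`, so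
the variable `a` divides `P(a, b, c)`.
-/

section ClearingDenominators

variable {σ R : Type*}

theorem exists_pow_mul_eval_comp_eq_eval [CommSemiring R] {S : Subalgebra R (MvPolynomial σ R)}
    {d : MvPolynomial σ R} (hd : d ∈ S) {U : Set (σ → R)} {v : (σ → R) → σ → R}
    (hv : ∀ i, ∃ s ∈ S, ∀ x ∈ U, eval x d * v x i = eval x s) (f : MvPolynomial σ R) :
    ∃ k : ℕ, ∃ s ∈ S, ∀ x ∈ U, eval x d ^ k * eval (v x) f = eval x s := by
  induction f using MvPolynomial.induction_on with
  | C a => exact ⟨0, C a, S.algebraMap_mem a, by simp⟩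
  | add p q hp hq =>
    obtain ⟨k, s, hs, hps⟩ := hp
    obtain ⟨l, t, ht, hqt⟩ := hq
    refine ⟨k + l, d ^ l * s + d ^ k * t,
      add_mem (mul_mem (pow_mem hd l) hs) (mul_mem (pow_mem hd k) ht), fun x hx => ?_⟩
    simp only [map_add, map_mul, map_pow, ← hps x hx, ← hqt x hx]
    ring
  | mul_X p i hp =>
    obtain ⟨k, s, hs, hps⟩ := hp
    obtain ⟨t, ht, hit⟩ := hv i
    refine ⟨k + 1, s * t, mul_mem hs ht, fun x hx => ?_⟩
    simp only [map_mul, eval_X, ← hps x hx, ← hit x hx]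
    ring

variable [CommRing R] [IsDomain R] [Infinite R]

theorem mul_eq_mul_of_eval_eq_of_ne_zero {d p q : MvPolynomial σ R}
    (h : ∀ x, eval x d ≠ 0 → eval x p = eval x q) : d * p = d * q := by
  refine MvPolynomial.funext fun x => ?_
  rw [map_mul, map_mul]
  obtain hx | hx := eq_or_ne (eval x d) 0
  · rw [hx, zero_mul, zero_mul]
  · rw [h x hx]

theorem exists_pow_mul_mem_of_eval_comp_eq {S : Subalgebra R (MvPolynomial σ R)}
    {d f : MvPolynomial σ R} (hd : d ∈ S) {v : (σ → R) → σ → R}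
    (hv : ∀ i, ∃ s ∈ S, ∀ x, eval x d ≠ 0 → eval x d * v x i = eval x s)
    (hf : ∀ x, eval x d ≠ 0 → eval (v x) f = eval x f) :
    ∃ k : ℕ, d ^ k * f ∈ S := by
  obtain ⟨k, s, hs, h⟩ := exists_pow_mul_eval_comp_eq_eval (U := {x | eval x d ≠ 0}) hd hv f
  have heq : d * (d ^ k * f) = d * s := mul_eq_mul_of_eval_eq_of_ne_zero fun x hx => by
    rw [map_mul, map_pow, ← hf x hx, h x hx]
  refine ⟨k + 1, ?_⟩
  rw [pow_succ', mul_assoc, heq]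
  exact mul_mem hd hs

end ClearingDenominators

section Division

variable {σ R A : Type*} [CommRing R] [DecidableEq σ]

theorem X_dvd_sub_aeval_update (i : σ) (p : MvPolynomial σ R) :
    X i ∣ p - aeval (Function.update X i 0) p := by
  let π := Ideal.Quotient.mkₐ R (Ideal.span {(X i : MvPolynomial σ R)})
  have hπ : π = π.comp (aeval (Function.update X i 0)) := by
    refine MvPolynomial.algHom_ext fun j => ?_
    obtain rfl | hj := eq_or_ne j i <;> simp [π, *]
  rw [← Ideal.mem_span_singleton, ← Ideal.Quotient.mk_eq_mk_iff_sub_mem]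
  exact DFunLike.congr_fun hπ p

variable [CommRing A] [IsDomain A] [Algebra R A]

theorem mem_range_aeval_of_mul_mem {a : σ → A} {i : σ} (hi : a i ≠ 0)
    {φ : A →ₐ[R] MvPolynomial σ R} (hφ : ∀ j, φ (a j) = Function.update X i 0 j) {f : A}
    (hf : a i * f ∈ (aeval (R := R) a).range) : f ∈ (aeval (R := R) a).range := by
  obtain ⟨P, hP : aeval a P = a i * f⟩ := hf
  have hP₀ : aeval (Function.update X i 0) P = 0 := calc
    aeval (Function.update X i 0) P = φ (aeval a P) := by
      rw [comp_aeval_apply]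
      simp only [hφ]
    _ = 0 := by rw [hP, map_mul, hφ, Function.update_self, zero_mul]
  obtain ⟨Q, rfl⟩ : X i ∣ P := by simpa only [hP₀, sub_zero] using X_dvd_sub_aeval_update i P
  rw [map_mul, aeval_X] at hP
  exact ⟨Q, mul_left_cancel₀ hi hP⟩

theorem mem_range_aeval_of_pow_mul_mem {a : σ → A} {i : σ} (hi : a i ≠ 0)
    {φ : A →ₐ[R] MvPolynomial σ R} (hφ : ∀ j, φ (a j) = Function.update X i 0 j) {f : A} {k : ℕ}
    (hf : a i ^ k * f ∈ (aeval (R := R) a).range) : f ∈ (aeval (R := R) a).range := by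
  induction k with
  | zero => simpa only [pow_zero, one_mul] using hf
  | succ k ih =>
    rw [pow_succ', mul_assoc] at hf
    exact ih (mem_range_aeval_of_mul_mem hi hφ hf)

end Division

section Substitution

variable {R m n : Type*} [CommSemiring R] [Fintype m]

/-- The algebra endomorphism `α_g` of the polynomial ring in the entries of an `m × n` matrix:
substitution of the entries of `g * X` for those of the generic matrix `X`. -/
noncomputable def matrixSubst (g : Matrix m m R) :
    MvPolynomial (m × n) R →ₐ[R] MvPolynomial (m × n) R :=
  aeval fun p => ∑ l, C (g p.1 l) * X (l, p.2)

theorem eval_matrixSubst (g : Matrix m m R) (x : m × n → R) (f : MvPolynomial (m × n) R) :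
    eval x (matrixSubst g f) = eval (fun p => (g * of x.curry) p.1 p.2) f := by
  simp only [← aeval_eq_eval, matrixSubst, comp_aeval_apply]
  simp [Matrix.mul_apply]

theorem map_matrixSubst_mvPolynomialX (g : Matrix m m R) :
    (mvPolynomialX m n R).map (matrixSubst g) = g.map (C (σ := m × n)) * mvPolynomialX m n R :=
  Matrix.ext fun i j => by simp [matrixSubst, Matrix.mul_apply]

end Substitution

section MaximalMinor

variable {R m n : Type*} [CommRing R] [Fintype m] [DecidableEq m]

/-- The maximal minor of the generic `m × n` matrix on the columns listed by `c`, in that order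
and with repetitions allowed. -/
noncomputable def maximalMinor (R : Type*) [CommRing R] (c : m → n) : MvPolynomial (m × n) R :=
  ((mvPolynomialX m n R).submatrix id c).det

/-- The subalgebra generated by the maximal minors of the generic `m × n` matrix. -/
noncomputable def maximalMinorSubalgebra (R m n : Type*) [CommRing R] [Fintype m] [DecidableEq m] :
    Subalgebra R (MvPolynomial (m × n) R) :=
  Algebra.adjoin R (Set.range (maximalMinor R))

theorem maximalMinor_mem (c : m → n) : maximalMinor R c ∈ maximalMinorSubalgebra R m n :=
  Algebra.subset_adjoin ⟨c, rfl⟩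

theorem eval_maximalMinor (x : m × n → R) (c : m → n) :
    eval x (maximalMinor R c) = ((of x.curry).submatrix id c).det := by
  rw [maximalMinor, RingHom.map_det]
  congr 1
  ext i j
  simp

theorem maximalMinor_ne_zero [Nontrivial R] {c : m → n} (hc : c.Injective) :
    maximalMinor R c ≠ 0 := by
  classical
  let x : m × n → R := fun p => if c p.1 = p.2 then 1 else 0
  have hx : (of x.curry).submatrix id c = 1 := by
    ext i j
    simp [x, one_apply, hc.eq_iff]
  intro h
  have heval := eval_maximalMinor x c
  rw [h, hx, map_zero, det_one] at heval
  exact zero_ne_one heval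

theorem matrixSubst_maximalMinor (g : Matrix m m R) (c : m → n) :
    matrixSubst g (maximalMinor R c) = C g.det * maximalMinor R c := by
  have h : (matrixSubst g).mapMatrix ((mvPolynomialX m n R).submatrix id c) =
      (C : R →+* MvPolynomial (m × n) R).mapMatrix g * (mvPolynomialX m n R).submatrix id c :=
    congrArg (submatrix · id c) (map_matrixSubst_mvPolynomialX g)
  rw [maximalMinor, AlgHom.map_det, h, det_mul, ← RingHom.map_det]

theorem matrixSubst_eq_self_of_mem_maximalMinorSubalgebra (g : SpecialLinearGroup m R)
    {f : MvPolynomial (m × n) R} (hf : f ∈ maximalMinorSubalgebra R m n) :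
    matrixSubst (g : Matrix m m R) f = f := by
  have hle : maximalMinorSubalgebra R m n ≤
      AlgHom.equalizer (matrixSubst (g : Matrix m m R)) (AlgHom.id R _) := by
    refine Algebra.adjoin_le ?_
    rintro _ ⟨c, rfl⟩
    change matrixSubst _ _ = _
    rw [matrixSubst_maximalMinor, g.det_coe, C_1, one_mul, AlgHom.id_apply]
  exact hle hf

end MaximalMinor

section NormalForm

variable {m n : Type*} [Fintype m] [DecidableEq m]

theorem det_submatrix_mul_inv_mul_apply {R : Type*} [CommRing R] (M : Matrix m n R) (c : m → n)
    (hM : IsUnit (M.submatrix id c).det) (i : m) (j : n) :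
    (M.submatrix id c).det * ((M.submatrix id c)⁻¹ * M) i j =
      (M.submatrix id (Function.update c i j)).det := by
  have hcol : (M.submatrix id c).updateCol i (M.col j) =
      M.submatrix id (Function.update c i j) := by
    ext k l
    by_cases h : l = i <;> simp [h]
  rw [← hcol, ← cramer_apply, ← det_smul_inv_mulVec_eq_cramer _ _ hM]
  rfl

variable {K : Type*} [Field K]

-- The witness is `N⁻¹` with row `i₀` rescaled by `det N`, where `N` is `M.submatrix id c`.
theorem exists_specialLinearGroup_det_mul_mul_apply (i₀ : m) (M : Matrix m n K) (c : m → n)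
    (hM : (M.submatrix id c).det ≠ 0) :
    ∃ g : SpecialLinearGroup m K, ∀ i j,
      (M.submatrix id c).det * ((g : Matrix m m K) * M) i j =
        (Pi.mulSingle i₀ (M.submatrix id c).det : m → K) i *
          (M.submatrix id (Function.update c i j)).det := by
  set N := M.submatrix id c
  refine ⟨⟨diagonal (Pi.mulSingle i₀ N.det) * N⁻¹, ?_⟩, fun i j => ?_⟩
  · rw [det_mul, det_diagonal, Finset.prod_pi_mulSingle', if_pos (Finset.mem_univ i₀),
      det_nonsing_inv, Ring.mul_inverse_cancel _ hM.isUnit]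
  · rw [← det_submatrix_mul_inv_mul_apply M c hM.isUnit, Matrix.mul_assoc, diagonal_mul,
      mul_left_comm]

theorem exists_maximalMinor_pow_mul_mem [Infinite K] [Nonempty m] (c : m → n)
    {f : MvPolynomial (m × n) K}
    (hf : ∀ g : SpecialLinearGroup m K, matrixSubst (g : Matrix m m K) f = f) :
    ∃ k : ℕ, maximalMinor K c ^ k * f ∈ maximalMinorSubalgebra K m n := by
  let d := maximalMinor K c
  have hdet (x : m × n → K) (hx : eval x d ≠ 0) : ((of x.curry).submatrix id c).det ≠ 0 := by
    rwa [← eval_maximalMinor]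
  let i₀ := Classical.arbitrary m
  choose! g hg using fun x hx =>
    exists_specialLinearGroup_det_mul_mul_apply i₀ (of x.curry) c (hdet x hx)
  refine exists_pow_mul_mem_of_eval_comp_eq (maximalMinor_mem c)
    (v := fun x p => ((g x : Matrix m m K) * of x.curry) p.1 p.2) (fun ⟨i, j⟩ => ?_) fun x _ => ?_
  · refine ⟨(Pi.mulSingle i₀ d : m → _) i * maximalMinor K (Function.update c i j),
      mul_mem ?_ (maximalMinor_mem _), fun x hx => ?_⟩
    · obtain rfl | hi := eq_or_ne i i₀ <;> simp [d, maximalMinor_mem, *]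
    · rw [eval_maximalMinor, hg x hx, map_mul, eval_maximalMinor]
      obtain rfl | hi := eq_or_ne i i₀ <;> simp [d, eval_maximalMinor, *]
  · rw [← eval_matrixSubst, hf]

end NormalForm

section TwoByThree

variable {R : Type*} [CommRing R]

/-- The minors `Δ₁₂`, `Δ₂₃`, `Δ₁₃` of the generic 2×3 matrix, in this order. -/
noncomputable def twoByThreeMinor (R : Type*) [CommRing R] :
    Fin 3 → MvPolynomial (Fin 2 × Fin 3) R :=
  ![X (0, 0) * X (1, 1) - X (0, 1) * X (1, 0),
    X (0, 1) * X (1, 2) - X (0, 2) * X (1, 1),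
    X (0, 0) * X (1, 2) - X (0, 2) * X (1, 0)]

theorem twoByThreeMinor_eq_maximalMinor (i : Fin 3) :
    twoByThreeMinor R i = maximalMinor R (![![0, 1], ![1, 2], ![0, 2]] i) := by
  fin_cases i <;> simp [twoByThreeMinor, maximalMinor, det_fin_two]

theorem maximalMinorSubalgebra_eq_range_aeval_twoByThreeMinor :
    maximalMinorSubalgebra R (Fin 2) (Fin 3) = (aeval (R := R) (twoByThreeMinor R)).range := by
  rw [← Algebra.adjoin_range_eq_range_aeval]
  refine le_antisymm (Algebra.adjoin_le ?_) (Algebra.adjoin_le ?_)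
  · rintro _ ⟨c, rfl⟩
    have hmem (i) : twoByThreeMinor R i ∈ Algebra.adjoin R (Set.range (twoByThreeMinor R)) :=
      Algebra.subset_adjoin ⟨i, rfl⟩
    have hlt {a b : Fin 3} (hab : a < b) : X (0, a) * X (1, b) - X (0, b) * X (1, a) ∈
        Algebra.adjoin R (Set.range (twoByThreeMinor R)) := by
      obtain ⟨rfl, rfl⟩ | ⟨rfl, rfl⟩ | ⟨rfl, rfl⟩ :
          (a = 0 ∧ b = 1) ∨ (a = 1 ∧ b = 2) ∨ (a = 0 ∧ b = 2) := by omega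
      exacts [hmem 0, hmem 1, hmem 2]
    simp only [maximalMinor, det_fin_two, submatrix_apply, mvPolynomialX_apply, id_eq]
    obtain h | h | h := lt_trichotomy (c 0) (c 1)
    · exact hlt h
    · rw [h, sub_self]
      exact zero_mem _
    · rw [← neg_sub]
      exact neg_mem (hlt h)
  · rintro _ ⟨i, rfl⟩
    rw [twoByThreeMinor_eq_maximalMinor]
    exact maximalMinor_mem _

theorem mem_range_aeval_of_twoByThreeMinor_pow_mul_mem [IsDomain R]
    {f : MvPolynomial (Fin 2 × Fin 3) R} {k : ℕ}
    (hf : twoByThreeMinor R 0 ^ k * f ∈ (aeval (R := R) (twoByThreeMinor R)).range) :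
    f ∈ (aeval (R := R) (twoByThreeMinor R)).range := by
  have hne : twoByThreeMinor R 0 ≠ 0 := by
    rw [twoByThreeMinor_eq_maximalMinor]
    exact maximalMinor_ne_zero (by decide)
  let φ : MvPolynomial (Fin 2 × Fin 3) R →ₐ[R] MvPolynomial (Fin 3) R :=
    aeval fun p => !![X 2, X 1, 0; 0, 0, 1] p.1 p.2
  have hφ (i : Fin 3) : φ (twoByThreeMinor R i) = Function.update X 0 0 i := by
    fin_cases i <;> simp [φ, twoByThreeMinor]
  exact mem_range_aeval_of_pow_mul_mem hne hφ hf

end TwoByThree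

theorem sl2_invariants_of_two_by_three_matrices_general
    (K : Type*) [Field K] [Infinite K] (f : MvPolynomial (Fin 2 × Fin 3) K) :
    (∀ g : SpecialLinearGroup (Fin 2) K,
        aeval (fun p : Fin 2 × Fin 3 =>
          ∑ l : Fin 2, C ((g : Matrix (Fin 2) (Fin 2) K) p.1 l) * X (l, p.2)) f = f) ↔
      f ∈ Algebra.adjoin K
        ({X (0, 0) * X (1, 1) - X (0, 1) * X (1, 0),
          X (0, 1) * X (1, 2) - X (0, 2) * X (1, 1),
          X (0, 0) * X (1, 2) - X (0, 2) * X (1, 0)} :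
            Set (MvPolynomial (Fin 2 × Fin 3) K)) := by
  have hset : ({X (0, 0) * X (1, 1) - X (0, 1) * X (1, 0),
      X (0, 1) * X (1, 2) - X (0, 2) * X (1, 1),
      X (0, 0) * X (1, 2) - X (0, 2) * X (1, 0)} : Set (MvPolynomial (Fin 2 × Fin 3) K)) =
      Set.range (twoByThreeMinor K) := by
    simp only [twoByThreeMinor, range_cons, range_empty, Set.union_empty, Set.singleton_union]
  rw [hset, Algebra.adjoin_range_eq_range_aeval]
  constructor
  · intro hf
    obtain ⟨k, hk⟩ := exists_maximalMinor_pow_mul_mem ![0, 1] hf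
    rw [maximalMinorSubalgebra_eq_range_aeval_twoByThreeMinor] at hk
    exact mem_range_aeval_of_twoByThreeMinor_pow_mul_mem
      (by rwa [twoByThreeMinor_eq_maximalMinor])
  · intro hf g
    rw [← maximalMinorSubalgebra_eq_range_aeval_twoByThreeMinor] at hf
    exact matrixSubst_eq_self_of_mem_maximalMinorSubalgebra g hf

/-- **First fundamental theorem for `SL(2)` acting on 2×3 matrices.**
Let `K` be a field of characteristic zero, `R = K[X_{ij}]` the polynomial ring
in the entries of a 2×3 matrix, and for `g ∈ SL(2,K)` let `α_g` be the algebra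
endomorphism with `α_g(X_{ij}) = Σ_l g_{il} X_{lj}`. A polynomial is invariant
under all `α_g` iff it lies in the `K`-subalgebra generated by the three
2×2 minors `Δ₁₂`, `Δ₂₃`, `Δ₁₃`. -/
theorem sl2_invariants_of_two_by_three_matrices
    (K : Type*) [Field K] [CharZero K] (f : MvPolynomial (Fin 2 × Fin 3) K) :
    (∀ g : SpecialLinearGroup (Fin 2) K,
        aeval (fun p : Fin 2 × Fin 3 =>
          ∑ l : Fin 2, C ((g : Matrix (Fin 2) (Fin 2) K) p.1 l) * X (l, p.2)) f = f) ↔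
      f ∈ Algebra.adjoin K
        ({X (0, 0) * X (1, 1) - X (0, 1) * X (1, 0),
          X (0, 1) * X (1, 2) - X (0, 2) * X (1, 1),
          X (0, 0) * X (1, 2) - X (0, 2) * X (1, 0)} :
            Set (MvPolynomial (Fin 2 × Fin 3) K)) := by
  exact sl2_invariants_of_two_by_three_matrices_general K f
end

section
/- Fix an integer m ≥ 2. For λ ∈ ℂ let ρ_λ be the ℂ-algebra automorphism of ℂ[x,y,z,s,t,u,v] determined by ρ_λ(x) = x, ρ_λ(y) = y, ρ_λ(z) = z, ρ_λ(s) = s + λx^{m+1}, ρ_λ(t) = t + λy^{m+1}, ρ_λ(u) = u + λz^{m+1}, ρ_λ(v) = v + λx^m y^m z^m. Then the invariant algebra {f ∈ ℂ[x,y,z,s,t,u,v] : ρ_λ(f) = f for all λ ∈ ℂ} is not finitely generated as a ℂ-algebra. -/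
open MvPolynomial

/-- The comorphism `ρ_λ` of the additive group action on `ℂ⁷` (Roberts/Section 4):
`x ↦ x`, `y ↦ y`, `z ↦ z`, `s ↦ s + λx^{m+1}`, `t ↦ t + λy^{m+1}`,
`u ↦ u + λz^{m+1}`, `v ↦ v + λx^m y^m z^m`
(variables `X 0 = x`, `X 1 = y`, `X 2 = z`, `X 3 = s`, `X 4 = t`, `X 5 = u`, `X 6 = v`). -/
noncomputable def robertsRho (m : ℕ) (l : ℂ) :
    MvPolynomial (Fin 7) ℂ →ₐ[ℂ] MvPolynomial (Fin 7) ℂ :=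
  aeval ![X 0, X 1, X 2,
          X 3 + C l * X 0 ^ (m + 1),
          X 4 + C l * X 1 ^ (m + 1),
          X 5 + C l * X 2 ^ (m + 1),
          X 6 + C l * X 0 ^ m * X 1 ^ m * X 2 ^ m]

/-!
The invariants are the kernel of the derivation `D` with `D x = 0`, `D s = x ^ (m + 1)` and
`D v = ∏ x ^ m`. If `h 0 = x i₀` and `D (h (k + 1)) = D v * h k`, then
`∑ k, (-1) ^ k * n (n - 1) ⋯ (n - k + 1) * v ^ (n - k) * h k` is an invariant with leading term
`x i₀ * v ^ n`. Such `h k` are homogenizations of polynomials in `s` alone, on which `D` becomes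
`∑ i, ∂ᵢ`; with the degree bounds that the homogenization imposes, this is the lowering operator of
a tensor product of `sl₂`-representations, so it is surjective below the middle degree.

No invariant contains a pure power of `v`. On restriction to the first infinitesimal neighbourhood
of the `v`-axis the invariants therefore become elements `c + p ε` with `c` constant, and finitely
many of those generate an algebra in which the degree of `p` is bounded.
-/

section Translation

variable {σ R : Type*} [CommRing R] (w : σ → MvPolynomial σ R)

/-- The endomorphism `X i ↦ X i + l * w i`, the time-`l` translation along the vector field `w`.
These form an action of the additive group of `R` if every `w i` is invariant under them. -/
noncomputable def translation (l : R) : MvPolynomial σ R →ₐ[R] MvPolynomial σ R :=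
  aeval fun i => X i + C l * w i

/-- The algebra of polynomials invariant under all translations along `w`. -/
noncomputable def translationInvariants : Subalgebra R (MvPolynomial σ R) :=
  ⨅ l, AlgHom.equalizer (translation w l) (AlgHom.id R _)

variable {w}

theorem mem_translationInvariants {f : MvPolynomial σ R} :
    f ∈ translationInvariants w ↔ ∀ l, translation w l f = f := by
  simp [translationInvariants, Algebra.mem_iInf]

variable (w)

/-- The translation along `w` by an indeterminate amount, the variable of the outer polynomial
ring. -/
noncomputable def genericTranslation : MvPolynomial σ R →ₐ[R] Polynomial (MvPolynomial σ R) :=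
  aeval fun i => Polynomial.C (X i) + Polynomial.X * Polynomial.C (w i)

theorem eval_genericTranslation (l : R) (f : MvPolynomial σ R) :
    (genericTranslation w f).eval (C l) = translation w l f := by
  have h : ((Polynomial.aeval (C l)).restrictScalars R).comp (genericTranslation w) =
      translation w l := by
    refine algHom_ext fun i => ?_
    simp [genericTranslation, translation, mul_comm (w i)]
  rw [← h]
  rfl

theorem translation_zero (f : MvPolynomial σ R) : translation w 0 f = f := by
  simp [translation]

variable {w}

theorem genericTranslation_eq_C [IsDomain R] [CharZero R] {f : MvPolynomial σ R}
    (hf : f ∈ translationInvariants w) : genericTranslation w f = Polynomial.C f := by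
  refine Polynomial.eq_of_infinite_eval_eq _ _ <|
    (Set.infinite_range_of_injective (C_injective σ R)).mono ?_
  rintro _ ⟨l, rfl⟩
  simp [eval_genericTranslation, mem_translationInvariants.mp hf l]

theorem derivative_genericTranslation [IsDomain R] [CharZero R]
    (hw : ∀ i, w i ∈ translationInvariants w) (f : MvPolynomial σ R) :
    (genericTranslation w f).derivative = genericTranslation w (mkDerivation R w f) := by
  induction f using MvPolynomial.induction_on with
  | C a => simp [genericTranslation, Polynomial.algebraMap_apply]
  | add p q hp hq => simp [hp, hq]
  | mul_X p i hp =>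
    have hX : (genericTranslation w (X i)).derivative = genericTranslation w (w i) := by
      rw [genericTranslation_eq_C (hw i), genericTranslation, aeval_X]
      simp
    rw [Derivation.leibniz, mkDerivation_X, map_mul, Polynomial.derivative_mul, hp, hX]
    simp only [map_add, smul_eq_mul, map_mul]
    ring

theorem mem_translationInvariants_iff_mkDerivation_eq_zero [IsDomain R] [CharZero R]
    (hw : ∀ i, w i ∈ translationInvariants w) {f : MvPolynomial σ R} :
    f ∈ translationInvariants w ↔ mkDerivation R w f = 0 := by
  have hD := derivative_genericTranslation hw f
  constructor
  · intro hf
    rw [genericTranslation_eq_C hf, Polynomial.derivative_C] at hD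
    rw [← translation_zero w (mkDerivation R w f), ← eval_genericTranslation, ← hD,
      Polynomial.eval_zero]
  · intro hf
    rw [hf, map_zero] at hD
    have hC := Polynomial.eq_C_of_natDegree_eq_zero (Polynomial.derivative_eq_zero.mp hD)
    have hconst (l : R) : translation w l f = (genericTranslation w f).coeff 0 := by
      rw [← eval_genericTranslation, hC, Polynomial.eval_C, Polynomial.coeff_C_zero]
    refine mem_translationInvariants.mpr fun l => ?_
    rw [hconst, ← hconst 0, translation_zero]

end Translation

theorem derivation_aeval {σ R A M : Type*} [Fintype σ] [CommSemiring R] [CommSemiring A]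
    [Algebra R A] [AddCommMonoid M] [Module R M] [Module A M]
    (D : Derivation R A M) (g : σ → A) (f : MvPolynomial σ R) :
    D (aeval g f) = ∑ i, aeval g (pderiv i f) • D (g i) := by
  classical
  induction f using MvPolynomial.induction_on with
  | C a => simp
  | add p q hp hq => simp [hp, hq, add_smul, Finset.sum_add_distrib]
  | mul_X p i hp =>
    simp [Derivation.leibniz, hp, pderiv_X, Pi.single_apply, add_smul, Finset.sum_add_distrib,
      mul_smul, Finset.smul_sum, apply_ite, ite_smul]

theorem derivation_eq_sum {σ R M : Type*} [Fintype σ] [CommSemiring R] [AddCommMonoid M]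
    [Module R M] [Module (MvPolynomial σ R) M] (D : Derivation R (MvPolynomial σ R) M)
    (f : MvPolynomial σ R) : D f = ∑ i, pderiv i f • D (X i) := by
  simpa using derivation_aeval D X f

section Ladder

variable {K V : Type*} [Field K] [CharZero K] [AddCommGroup V] [Module K V]
  {W : ℕ → Submodule K V} {E F : Module.End K V} {N : ℕ}

/-- `W e` plays the role of the weight space of weight `2 * e - N` of an `sl₂`-representation with
lowering operator `E` and raising operator `F`. The induction moves the equation for `F ∘ E + a` on
`W (e + 1)` to the one for `F ∘ E + (N - 2 * e + a)` on `W e`. -/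
theorem exists_raise_lower_add_smul_eq
    (hE₀ : ∀ x ∈ W 0, E x = 0) (hE : ∀ e, ∀ x ∈ W (e + 1), E x ∈ W e)
    (hF : ∀ e, ∀ x ∈ W e, F x ∈ W (e + 1))
    (hEF : ∀ e, ∀ x ∈ W e, E (F x) = F (E x) + ((N : K) - 2 * e) • x)
    {e : ℕ} (he : 2 * e < N + 2) {a : ℕ} (ha : 0 < a) {g : V} (hg : g ∈ W e) :
    ∃ x ∈ W e, F (E x) + (a : K) • x = g := by
  have ha' : (a : K) ≠ 0 := by exact_mod_cast ha.ne'
  induction e generalizing a g with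
  | zero =>
    refine ⟨(a : K)⁻¹ • g, (W 0).smul_mem _ hg, ?_⟩
    rw [map_smul, hE₀ g hg, smul_zero, map_zero, zero_add, smul_inv_smul₀ ha']
  | succ e ih =>
    have hpos : 0 < N - 2 * e + a := by lia
    obtain ⟨y, hy, hyg⟩ := ih (by lia) hpos (hE e g hg) (by exact_mod_cast hpos.ne')
    have hcast : ((N - 2 * e + a : ℕ) : K) = (N : K) - 2 * e + a := by
      push_cast [show 2 * e ≤ N by lia]
      ring
    have hEg : E (g - F y) = (a : K) • y := by
      rw [map_sub, hEF e y hy, ← hyg, hcast]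
      module
    refine ⟨(a : K)⁻¹ • (g - F y), (W _).smul_mem _ ((W _).sub_mem hg (hF e y hy)), ?_⟩
    rw [map_smul, hEg, inv_smul_smul₀ ha', smul_inv_smul₀ ha', add_sub_cancel]

theorem exists_mem_lower_eq
    (hE₀ : ∀ x ∈ W 0, E x = 0) (hE : ∀ e, ∀ x ∈ W (e + 1), E x ∈ W e)
    (hF : ∀ e, ∀ x ∈ W e, F x ∈ W (e + 1))
    (hEF : ∀ e, ∀ x ∈ W e, E (F x) = F (E x) + ((N : K) - 2 * e) • x)
    {e : ℕ} (he : 2 * e < N) {g : V} (hg : g ∈ W e) : ∃ x ∈ W (e + 1), E x = g := by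
  obtain ⟨x, hx, hxg⟩ :=
    exists_raise_lower_add_smul_eq hE₀ hE hF hEF (by lia) (Nat.sub_pos_of_lt he) hg
  refine ⟨F x, hF e x hx, ?_⟩
  rw [hEF e x hx, ← hxg]
  push_cast [he.le]
  rfl

end Ladder

section DiagonalDerivation

variable {ι R : Type*} [CommRing R]

variable (ι R) in
/-- The derivation `∑ i, ∂ᵢ` of `R[ι]`. -/
noncomputable def diagonalDerivation : Derivation R (MvPolynomial ι R) (MvPolynomial ι R) :=
  mkDerivation R fun _ => 1

variable (R) in
/-- The homogeneous polynomials of degree `e` whose degree in each variable `i` is at most `p i`.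
For varying `e` these are the weight spaces of the tensor product of the irreducible
`sl₂`-representations of dimensions `p i + 1`. -/
noncomputable def boxHomogeneous (p : ι → ℕ) (e : ℕ) : Submodule R (MvPolynomial ι R) :=
  restrictSupport R {d | d.degree = e ∧ ⇑d ≤ p}

theorem mem_boxHomogeneous {p : ι → ℕ} {e : ℕ} {f : MvPolynomial ι R} :
    f ∈ boxHomogeneous R p e ↔ ∀ d, coeff d f ≠ 0 → d.degree = e ∧ ⇑d ≤ p :=
  forall_congr' fun _ => imp_congr_left mem_support_iff

theorem boxHomogeneous_mono {p q : ι → ℕ} (hpq : p ≤ q) (e : ℕ) :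
    boxHomogeneous R p e ≤ boxHomogeneous R q e :=
  restrictSupport_mono R fun _ hd => ⟨hd.1, hd.2.trans hpq⟩

theorem one_mem_boxHomogeneous (p : ι → ℕ) : 1 ∈ boxHomogeneous R p 0 :=
  monomial_mem_restrictSupport R |>.mpr (.inl ⟨map_zero _, fun _ => Nat.zero_le _⟩)

theorem isHomogeneous_of_mem_boxHomogeneous {p : ι → ℕ} {e : ℕ} {f : MvPolynomial ι R}
    (hf : f ∈ boxHomogeneous R p e) : f.IsHomogeneous e := by
  intro d hd
  rw [← (mem_boxHomogeneous.mp hf d hd).1, Finsupp.degree_eq_weight_one]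
  rfl

theorem pderiv_mem_boxHomogeneous {p : ι → ℕ} {e : ℕ} {f : MvPolynomial ι R}
    (hf : f ∈ boxHomogeneous R p (e + 1)) (i : ι) : pderiv i f ∈ boxHomogeneous R p e := by
  refine mem_boxHomogeneous.mpr fun d hd => ?_
  rw [coeff_pderiv] at hd
  obtain ⟨hdeg, hle⟩ := mem_boxHomogeneous.mp hf _ (left_ne_zero_of_mul hd)
  rw [map_add, Finsupp.degree_single] at hdeg
  exact ⟨Nat.add_right_cancel hdeg, le_trans (by simp) hle⟩

theorem coeff_X_mul_pderiv (i : ι) (f : MvPolynomial ι R) (d : ι →₀ ℕ) :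
    coeff d (X i * pderiv i f) = d i * coeff d f := by
  classical
  induction f using MvPolynomial.induction_on' with
  | add f g hf hg => simp only [map_add, mul_add, coeff_add, hf, hg]
  | monomial a c =>
    rw [X_mul_pderiv_monomial, coeff_smul, coeff_monomial, nsmul_eq_mul]
    split_ifs with h
    · rw [h]
    · simp

theorem pderiv_diagonalDerivation (i : ι) (f : MvPolynomial ι R) :
    pderiv i (diagonalDerivation ι R f) = diagonalDerivation ι R (pderiv i f) := by
  classical
  have h : ⁅pderiv (R := R) i, diagonalDerivation ι R⁆ = 0 := by
    refine derivation_ext fun j : ι => ?_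
    simp [Derivation.commutator_apply, diagonalDerivation, pderiv_X, Pi.single_apply, apply_ite]
  exact sub_eq_zero.mp (DFunLike.congr_fun h f)

theorem diagonalDerivation_eq_zero_of_isHomogeneous_zero {f : MvPolynomial ι R}
    (hf : f.IsHomogeneous 0) : diagonalDerivation ι R f = 0 := by
  rw [← totalDegree_zero_iff_isHomogeneous, totalDegree_eq_zero_iff_eq_C] at hf
  rw [hf, derivation_C]

theorem diagonalDerivation_apply [Fintype ι] (f : MvPolynomial ι R) :
    diagonalDerivation ι R f = ∑ i, pderiv i f := by
  simpa [diagonalDerivation] using derivation_eq_sum (diagonalDerivation ι R) f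

theorem diagonalDerivation_mem_boxHomogeneous [Finite ι] {p : ι → ℕ} {e : ℕ}
    {f : MvPolynomial ι R} (hf : f ∈ boxHomogeneous R p (e + 1)) :
    diagonalDerivation ι R f ∈ boxHomogeneous R p e := by
  cases nonempty_fintype ι
  rw [diagonalDerivation_apply]
  exact sum_mem fun i _ => pderiv_mem_boxHomogeneous hf i

variable [Fintype ι]

/-- The raising operator of the `sl₂`-action on `boxHomogeneous R p` in which
`diagonalDerivation ι R` is the lowering operator. -/
noncomputable def raisingOperator (p : ι → ℕ) : Module.End R (MvPolynomial ι R) :=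
  ∑ i, LinearMap.mulLeft R (X i) ∘ₗ
    (p i • LinearMap.id - LinearMap.mulLeft R (X i) ∘ₗ (pderiv i).toLinearMap)

theorem raisingOperator_apply (p : ι → ℕ) (f : MvPolynomial ι R) :
    raisingOperator p f = ∑ i, X i * (p i • f - X i * pderiv i f) := by
  simp [raisingOperator]

theorem raisingOperator_mem_boxHomogeneous {p : ι → ℕ} {e : ℕ} {f : MvPolynomial ι R}
    (hf : f ∈ boxHomogeneous R p e) : raisingOperator p f ∈ boxHomogeneous R p (e + 1) := by
  classical
  rw [raisingOperator_apply]
  refine sum_mem fun i _ => mem_boxHomogeneous.mpr fun d' hd' => ?_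
  rw [← mem_support_iff, support_X_mul] at hd'
  obtain ⟨d, hd, rfl⟩ := Finset.mem_map.mp hd'
  rw [mem_support_iff, coeff_sub, coeff_smul, coeff_X_mul_pderiv, nsmul_eq_mul, ← sub_mul] at hd
  obtain ⟨hdeg, hdp⟩ := mem_boxHomogeneous.mp hf d (right_ne_zero_of_mul hd)
  have hdi : d i ≠ p i := fun h => left_ne_zero_of_mul hd (by simp [h])
  refine ⟨by simp [hdeg, add_comm], fun j => ?_⟩
  obtain rfl | hij := eq_or_ne i j
  · have := lt_of_le_of_ne (hdp i) hdi
    simp only [addLeftEmbedding_apply, Finsupp.coe_add, Pi.add_apply, Finsupp.single_eq_same]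
    lia
  · simpa [hij] using hdp j

theorem diagonalDerivation_raisingOperator {p : ι → ℕ} {e : ℕ} {f : MvPolynomial ι R}
    (hf : f.IsHomogeneous e) :
    diagonalDerivation ι R (raisingOperator p f) =
      raisingOperator p (diagonalDerivation ι R f) + (((∑ i, p i : ℕ) : R) - 2 * e) • f := by
  have hX (i : ι) : diagonalDerivation ι R (X i) = 1 := mkDerivation_X _ _ _
  have hterm (i : ι) : diagonalDerivation ι R (X i * (p i • f - X i * pderiv i f)) =
      X i * (p i • diagonalDerivation ι R f - X i * pderiv i (diagonalDerivation ι R f)) +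
        (p i • f - 2 * (X i * pderiv i f)) := by
    simp only [Derivation.leibniz, hX, map_sub, pderiv_diagonalDerivation, smul_eq_mul,
      nsmul_eq_mul, Derivation.map_natCast]
    ring
  rw [raisingOperator_apply, map_sum, Finset.sum_congr rfl fun i _ => hterm i,
    Finset.sum_add_distrib, ← raisingOperator_apply, Finset.sum_sub_distrib, ← Finset.mul_sum,
    hf.sum_X_mul_pderiv, ← Finset.sum_smul, ← Nat.cast_smul_eq_nsmul R,
    ← Nat.cast_smul_eq_nsmul R]
  simp only [Algebra.smul_def, map_sub, map_mul, map_natCast, map_ofNat]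
  ring

theorem exists_diagonalDerivation_eq {K : Type*} [Field K] [CharZero K] {p : ι → ℕ} {e : ℕ}
    (he : 2 * e < ∑ i, p i) {g : MvPolynomial ι K} (hg : g ∈ boxHomogeneous K p e) :
    ∃ f ∈ boxHomogeneous K p (e + 1), diagonalDerivation ι K f = g :=
  exists_mem_lower_eq (E := (diagonalDerivation ι K).toLinearMap) (F := raisingOperator p)
    (fun _ hf => diagonalDerivation_eq_zero_of_isHomogeneous_zero
      (isHomogeneous_of_mem_boxHomogeneous hf))
    (fun _ _ => diagonalDerivation_mem_boxHomogeneous)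
    (fun _ _ => raisingOperator_mem_boxHomogeneous)
    (fun _ _ hf => diagonalDerivation_raisingOperator (isHomogeneous_of_mem_boxHomogeneous hf))
    he hg

end DiagonalDerivation

theorem coeff_aeval_pi_single {σ R : Type*} [CommSemiring R] [DecidableEq σ] (i : σ) (n : ℕ)
    (f : MvPolynomial σ R) :
    (aeval (Pi.single i (Polynomial.X : Polynomial R)) f).coeff n =
      coeff (Finsupp.single i n) f := by
  induction f using MvPolynomial.induction_on' with
  | add f g hf hg => simp only [map_add, Polynomial.coeff_add, coeff_add, hf, hg]
  | monomial d c =>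
    rw [aeval_monomial, coeff_monomial]
    by_cases hd : d = Finsupp.single i (d i)
    · rw [hd, Finsupp.prod_single_index (by rw [pow_zero]), Pi.single_eq_same,
        ← Polynomial.C_eq_algebraMap, Polynomial.coeff_C_mul_X_pow]
      simp only [(Finsupp.single_injective i).eq_iff, eq_comm]
    · obtain ⟨j, hij, hj⟩ : ∃ j, j ≠ i ∧ d j ≠ 0 := by
        by_contra! h
        exact hd (Finsupp.eq_single_iff.mpr ⟨fun j => by simpa using mt (h j), rfl⟩)
      rw [Finsupp.prod, Finset.prod_eq_zero (Finsupp.mem_support_iff.mpr hj)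
        (by rw [Pi.single_eq_of_ne hij, zero_pow hj]), mul_zero, Polynomial.coeff_zero, if_neg]
      rintro rfl
      exact hj (Finsupp.single_eq_of_ne hij)

theorem derivation_sum_descFactorial {R A : Type*} [CommRing R] [CommRing A] [Algebra R A]
    (D : Derivation R A A) {v : A} {h : ℕ → A} (h₀ : D (h 0) = 0)
    (hsucc : ∀ k, D (h (k + 1)) = D v * h k) (n N : ℕ) :
    D (∑ k ∈ Finset.range (N + 1), (-1) ^ k * n.descFactorial k * v ^ (n - k) * h k) =
      (-1) ^ N * n.descFactorial (N + 1) * v ^ (n - (N + 1)) * (D v * h N) := by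
  induction N with
  | zero =>
    rw [Finset.sum_range_one]
    simp only [Derivation.leibniz, Derivation.leibniz_pow, h₀, pow_zero, Nat.descFactorial_zero,
      Nat.cast_one, Nat.descFactorial_one, Nat.sub_zero, zero_add, one_mul, smul_eq_mul,
      nsmul_eq_mul, mul_zero]
    ring
  | succ N ih =>
    rw [Finset.sum_range_succ, map_add, ih]
    simp only [Derivation.leibniz, Derivation.leibniz_pow, hsucc, smul_eq_mul, nsmul_eq_mul,
      Nat.descFactorial_succ n (N + 1), Nat.sub_sub, Derivation.map_natCast, map_neg,
      Derivation.map_one_eq_zero]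
    push_cast
    ring

theorem derivation_sum_descFactorial_eq_zero {R A : Type*} [CommRing R] [CommRing A] [Algebra R A]
    (D : Derivation R A A) {v : A} {h : ℕ → A} (h₀ : D (h 0) = 0)
    (hsucc : ∀ k, D (h (k + 1)) = D v * h k) (n : ℕ) :
    D (∑ k ∈ Finset.range (n + 1), (-1) ^ k * n.descFactorial k * v ^ (n - k) * h k) = 0 := by
  simp [derivation_sum_descFactorial D h₀ hsucc]

theorem exists_natDegree_snd_le_of_fg {R : Type*} [CommSemiring R]
    {B : Subalgebra R (DualNumber (Polynomial R))} (hB : B.FG)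
    (hfst : ∀ f ∈ B, f.fst.natDegree = 0) : ∃ N, ∀ f ∈ B, f.snd.natDegree ≤ N := by
  obtain ⟨S, rfl⟩ := hB
  refine ⟨S.sup fun f => f.snd.natDegree, fun f hf => ?_⟩
  induction hf using Algebra.adjoin_induction with
  | mem f hf => exact Finset.le_sup (f := fun f => f.snd.natDegree) hf
  | algebraMap _ => simp [TrivSqZeroExt.algebraMap_eq_inl']
  | add f g _ _ hf hg => exact Polynomial.natDegree_add_le_of_degree_le hf hg
  | mul f g hfB hgB hf hg =>
    rw [DualNumber.snd_mul]
    refine Polynomial.natDegree_add_le_of_degree_le ?_ ?_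
    · simpa using Polynomial.natDegree_mul_le_of_le (hfst f hfB).le hg
    · simpa using Polynomial.natDegree_mul_le_of_le hf (hfst g hgB).le

section Roberts

/-- The variables of Roberts' polynomial ring. In the classical case `ι = Fin 3`, the family `x`
consists of `x, y, z` and the family `s` of `s, t, u`. -/
inductive RobertsVar (ι : Type*)
  | x (i : ι)
  | s (i : ι)
  | v
  deriving Fintype, DecidableEq

variable {ι K : Type*} [CommRing K]

variable (K) in
/-- Restriction to the first infinitesimal neighbourhood, in the direction of `x i₀`, of the line
on which all `x` and `s` vanish; `v` becomes the coordinate of the line and `x i₀` becomes `ε`. -/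
noncomputable def restrictLine [DecidableEq ι] (i₀ : ι) :
    MvPolynomial (RobertsVar ι) K →ₐ[K] DualNumber (Polynomial K) :=
  aeval fun
    | .x i => if i = i₀ then DualNumber.eps else 0
    | .s _ => 0
    | .v => TrivSqZeroExt.inl Polynomial.X

theorem fst_restrictLine [DecidableEq ι] (i₀ : ι) (f : MvPolynomial (RobertsVar ι) K) :
    (restrictLine K i₀ f).fst = aeval (Pi.single RobertsVar.v (Polynomial.X : Polynomial K)) f := by
  have h : (TrivSqZeroExt.fstHom K _ _).comp (restrictLine K i₀) =
      aeval (Pi.single RobertsVar.v (Polynomial.X : Polynomial K)) := by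
    refine algHom_ext fun j => ?_
    cases j <;> simp [restrictLine, apply_ite TrivSqZeroExt.fst]
  exact DFunLike.congr_fun h f

theorem restrictLine_rename_s [DecidableEq ι] (i₀ : ι) (f : MvPolynomial ι K) :
    restrictLine K i₀ (rename .s f) = algebraMap K _ (constantCoeff f) := by
  rw [restrictLine, aeval_rename, ← aeval_zero]
  rfl

variable [Fintype ι]

variable (K) in
/-- The monomial `∏ i, x i ^ a i`. -/
noncomputable def xMonomial (a : ι → ℕ) : MvPolynomial (RobertsVar ι) K :=
  ∏ i, X (.x i) ^ a i

theorem xMonomial_add (a b : ι → ℕ) : xMonomial K (a + b) = xMonomial K a * xMonomial K b := by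
  simp only [xMonomial, Pi.add_apply, pow_add, Finset.prod_mul_distrib]

theorem xMonomial_single [DecidableEq ι] (i : ι) (n : ℕ) :
    xMonomial K (Pi.single i n) = X (.x i) ^ n := by
  rw [xMonomial, Finset.prod_eq_single i (fun j _ hj => by simp [hj]) (by simp),
    Pi.single_eq_same]

theorem xMonomial_eq_monomial (a : ι → ℕ) :
    xMonomial K a = monomial (∑ i, Finsupp.single (.x i) (a i)) 1 := by
  simp only [monomial_sum_one, xMonomial, X_pow_eq_monomial]

variable (ι K) in
/-- The vector field of the Roberts action. -/
noncomputable def robertsField (m : ℕ) : RobertsVar ι → MvPolynomial (RobertsVar ι) K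
  | .x _ => 0
  | .s i => X (.x i) ^ (m + 1)
  | .v => xMonomial K fun _ => m

theorem robertsField_mem_translationInvariants (m : ℕ) (j : RobertsVar ι) :
    robertsField ι K m j ∈ translationInvariants (robertsField ι K m) := by
  have hx (i : ι) : X (.x i) ∈ translationInvariants (robertsField ι K m) :=
    mem_translationInvariants.mpr fun l => by simp [translation, robertsField]
  cases j with
  | x i => exact zero_mem _
  | s i => exact pow_mem (hx i) _
  | v => exact prod_mem fun i _ => pow_mem (hx i) _

variable (ι K) in
/-- The locally nilpotent derivation whose exponential is the Roberts action. -/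
noncomputable def robertsDerivation (m : ℕ) :
    Derivation K (MvPolynomial (RobertsVar ι) K) (MvPolynomial (RobertsVar ι) K) :=
  mkDerivation K (robertsField ι K m)

theorem robertsDerivation_X (m : ℕ) (j : RobertsVar ι) :
    robertsDerivation ι K m (X j) = robertsField ι K m j :=
  mkDerivation_X K _ j

theorem robertsDerivation_rename_s (m : ℕ) (f : MvPolynomial ι K) :
    robertsDerivation ι K m (rename .s f) =
      ∑ i, rename .s (pderiv i f) * X (.x i) ^ (m + 1) := by
  simp only [rename_eq_aeval, derivation_aeval, Function.comp_apply, robertsDerivation_X,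
    robertsField, smul_eq_mul]

theorem robertsDerivation_xMonomial (m : ℕ) (a : ι → ℕ) :
    robertsDerivation ι K m (xMonomial K a) = 0 := by
  have h : xMonomial K a = aeval (fun i => X (.x i)) (∏ i, X i ^ a i : MvPolynomial ι K) := by
    simp [xMonomial]
  rw [h, derivation_aeval]
  simp [robertsDerivation_X, robertsField]

theorem coeff_single_v_eq_zero [IsDomain K] [CharZero K] {m n : ℕ} (hn : n ≠ 0)
    {f : MvPolynomial (RobertsVar ι) K} (hf : robertsDerivation ι K m f = 0) :
    coeff (Finsupp.single RobertsVar.v n) f = 0 := by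
  classical
  obtain ⟨n, rfl⟩ := Nat.exists_eq_succ_of_ne_zero hn
  let e : RobertsVar ι →₀ ℕ := ∑ i, Finsupp.single (RobertsVar.x i) m
  have hex (i : ι) : (Finsupp.single RobertsVar.v n + e : RobertsVar ι →₀ ℕ) (.x i) = m := by
    simp [e, Finsupp.single_apply]
  have hterm (j : RobertsVar ι) (hj : j ≠ .v) :
      coeff (Finsupp.single RobertsVar.v n + e) (pderiv j f * robertsField ι K m j) = 0 := by
    cases j with
    | x i => simp [robertsField]
    | s i =>
      rw [robertsField, X_pow_eq_monomial, coeff_mul_monomial', if_neg]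
      intro hle
      have := hle (.x i)
      rw [hex, Finsupp.single_eq_same] at this
      lia
    | v => exact absurd rfl hj
  have hv : coeff (Finsupp.single RobertsVar.v n + e) (pderiv .v f * robertsField ι K m .v) =
      coeff (Finsupp.single RobertsVar.v (n + 1)) f * (n + 1) := by
    rw [robertsField, xMonomial_eq_monomial, coeff_mul_monomial, mul_one, coeff_pderiv,
      Finsupp.single_add, Finsupp.single_eq_same]
  have hsum := congrArg (coeff (Finsupp.single RobertsVar.v n + e)) hf
  rw [derivation_eq_sum] at hsum
  simp only [robertsDerivation_X, smul_eq_mul, coeff_sum, coeff_zero] at hsum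
  rw [Fintype.sum_eq_single _ hterm, hv] at hsum
  exact (mul_eq_zero.mp hsum).resolve_right n.cast_add_one_ne_zero

theorem natDegree_fst_restrictLine [DecidableEq ι] [IsDomain K] [CharZero K] {m : ℕ} (i₀ : ι)
    {f : MvPolynomial (RobertsVar ι) K} (hf : robertsDerivation ι K m f = 0) :
    (restrictLine K i₀ f).fst.natDegree = 0 := by
  refine Nat.le_zero.mp (Polynomial.natDegree_le_iff_coeff_eq_zero.mpr fun n hn => ?_)
  rw [fst_restrictLine, coeff_aeval_pi_single, coeff_single_v_eq_zero hn.ne' hf]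

variable (K) in
/-- The linear map `s ^ d ↦ x ^ (a - (m + 1) d) s ^ d`; on monomials with `(m + 1) d ≤ a` it is the
substitution `s i ↦ s i / x i ^ (m + 1)` followed by multiplication with `x ^ a`. -/
noncomputable def homogenize (m : ℕ) (a : ι → ℕ) :
    MvPolynomial ι K →ₗ[K] MvPolynomial (RobertsVar ι) K :=
  (basisMonomials ι K).constr K fun d =>
    xMonomial K (a - (m + 1) • ⇑d) * rename .s (monomial d 1)

theorem homogenize_monomial (m : ℕ) (a : ι → ℕ) (d : ι →₀ ℕ) :
    homogenize K m a (monomial d 1) =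
      xMonomial K (a - (m + 1) • ⇑d) * rename .s (monomial d 1) :=
  (basisMonomials ι K).constr_basis K _ d

theorem homogenize_one (m : ℕ) (a : ι → ℕ) : homogenize K m a 1 = xMonomial K a := by
  simpa using homogenize_monomial (K := K) m a 0

theorem homogenize_add {m : ℕ} {a : ι → ℕ} {f : MvPolynomial ι K}
    (hf : f ∈ restrictSupport K {d : ι →₀ ℕ | (m + 1) • ⇑d ≤ a}) (c : ι → ℕ) :
    homogenize K m (a + c) f = xMonomial K c * homogenize K m a f := by
  rw [restrictSupport_eq_span] at hf
  refine LinearMap.eqOn_span' (f := homogenize K m (a + c))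
    (g := LinearMap.mulLeft K (xMonomial K c) ∘ₗ homogenize K m a) ?_ hf
  rintro _ ⟨d, hd : (m + 1) • ⇑d ≤ a, rfl⟩
  rw [LinearMap.comp_apply, LinearMap.mulLeft_apply, homogenize_monomial, homogenize_monomial,
    ← mul_assoc, ← xMonomial_add, ← add_tsub_assoc_of_le hd, add_comm c]

theorem boxHomogeneous_div_le_restrictSupport {ι R : Type*} [CommRing R] (m : ℕ) (a : ι → ℕ)
    (e : ℕ) :
    boxHomogeneous R (fun i => a i / (m + 1)) e ≤
      restrictSupport R {d : ι →₀ ℕ | (m + 1) • ⇑d ≤ a} :=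
  restrictSupport_mono R fun _ hd i =>
    (Nat.mul_le_mul_left _ (hd.2 i)).trans (Nat.mul_div_le _ _)

theorem robertsDerivation_homogenize_monomial {m : ℕ} {a : ι → ℕ} {d : ι →₀ ℕ}
    (hd : (m + 1) • ⇑d ≤ a) :
    robertsDerivation ι K m (homogenize K m a (monomial d 1)) =
      homogenize K m a (diagonalDerivation ι K (monomial d 1)) := by
  classical
  rw [homogenize_monomial, Derivation.leibniz, robertsDerivation_xMonomial, smul_zero, add_zero,
    robertsDerivation_rename_s, diagonalDerivation_apply, map_sum, Finset.smul_sum]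
  refine Finset.sum_congr rfl fun i _ => ?_
  have hpderiv : pderiv i (monomial d (1 : K)) = d i • monomial (d - Finsupp.single i 1) 1 := by
    rw [pderiv_monomial, smul_monomial, nsmul_eq_mul, mul_comm]
  rw [hpderiv, map_nsmul, map_nsmul, homogenize_monomial, smul_eq_mul, smul_mul_assoc,
    mul_smul_comm, mul_left_comm, mul_comm, mul_assoc]
  obtain hi | hi := Nat.eq_zero_or_pos (d i)
  · rw [hi, zero_smul, zero_smul]
  · have hexp : a - (m + 1) • (⇑d - Pi.single i 1) = Pi.single i (m + 1) + (a - (m + 1) • ⇑d) := by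
      ext j
      have hdj : (m + 1) * d j ≤ a j := hd j
      simp only [Pi.sub_apply, Pi.add_apply, Pi.smul_apply, smul_eq_mul, Nat.mul_sub]
      obtain rfl | hij := eq_or_ne i j
      · have hdi : (m + 1) * 1 ≤ (m + 1) * d i := Nat.mul_le_mul_left _ hi
        simp only [Pi.single_eq_same]
        lia
      · simp only [Pi.single_eq_of_ne hij.symm, mul_zero, Nat.sub_zero, zero_add]
    rw [Finsupp.coe_tsub, Finsupp.single_eq_pi_single, hexp, xMonomial_add, xMonomial_single]
    ring

theorem robertsDerivation_homogenize {m : ℕ} {a : ι → ℕ} {f : MvPolynomial ι K}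
    (hf : f ∈ restrictSupport K {d : ι →₀ ℕ | (m + 1) • ⇑d ≤ a}) :
    robertsDerivation ι K m (homogenize K m a f) =
      homogenize K m a (diagonalDerivation ι K f) := by
  rw [restrictSupport_eq_span] at hf
  refine LinearMap.eqOn_span' (f := (robertsDerivation ι K m).toLinearMap ∘ₗ homogenize K m a)
    (g := homogenize K m a ∘ₗ (diagonalDerivation ι K).toLinearMap) ?_ hf
  rintro _ ⟨d, hd, rfl⟩
  exact robertsDerivation_homogenize_monomial hd

theorem restrictLine_homogenize [DecidableEq ι] (i₀ : ι) (m : ℕ) (a : ι → ℕ)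
    (f : MvPolynomial ι K) : restrictLine K i₀ (homogenize K m a f) =
      constantCoeff f • restrictLine K i₀ (xMonomial K a) := by
  induction f using MvPolynomial.induction_on' with
  | add f g hf hg => simp only [map_add, hf, hg, add_smul]
  | monomial d c =>
    have hd : monomial d c = c • monomial d (1 : K) := by
      rw [smul_monomial, smul_eq_mul, mul_one]
    rw [hd, map_smul, map_smul, homogenize_monomial, map_mul, restrictLine_rename_s,
      constantCoeff_smul, constantCoeff_monomial]
    split_ifs with h0
    · simp [h0]
    · simp

end Roberts

theorem exists_seq_preimage {V : Type*} {W : ℕ → Set V} {E : V → V} {g : V} (hg : g ∈ W 0)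
    (hW : ∀ k, W k ⊆ E '' W (k + 1)) :
    ∃ b : ℕ → V, b 0 = g ∧ (∀ k, b k ∈ W k) ∧ ∀ k, E (b (k + 1)) = b k := by
  have : Nonempty V := ⟨g⟩
  choose! next hnext using hW
  let b (k : ℕ) : V := Nat.rec g next k
  have hb (k : ℕ) : b k ∈ W k := by
    induction k with
    | zero => exact hg
    | succ k ih => exact (hnext k ih).1
  exact ⟨b, rfl, hb, fun k => (hnext k (hb k)).2⟩

section ChainExponent

variable {ι : Type*} [DecidableEq ι] {m : ℕ}

/-- The exponents of `x i₀ * (∏ i, x i ^ m) ^ k`. If `diagonalDerivation ι K (b (k + 1)) = b k` for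
all `k`, then homogenizing each `b k` by them gives `h k` with `D (h (k + 1)) = D v * h k`, where
`D` is the Roberts derivation. -/
def chainExponent (m : ℕ) (i₀ : ι) (k : ℕ) : ι → ℕ :=
  Pi.single i₀ 1 + fun _ => k * m

theorem chainExponent_zero (m : ℕ) (i₀ : ι) : chainExponent m i₀ 0 = Pi.single i₀ 1 := by
  simp [chainExponent, Pi.zero_def]

theorem chainExponent_succ (m : ℕ) (i₀ : ι) (k : ℕ) :
    chainExponent m i₀ (k + 1) = chainExponent m i₀ k + fun _ => m := by
  ext i
  simp only [chainExponent, Pi.add_apply]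
  ring

theorem chainExponent_succ_div (i₀ i : ι) {c r : ℕ} (hr : r ≤ m) :
    chainExponent m i₀ ((m + 1) * c + r + 1) i / (m + 1) =
      m * c + r + (m - r + (Pi.single i₀ 1 : ι → ℕ) i) / (m + 1) := by
  rw [← Nat.mul_add_div m.succ_pos, chainExponent, Pi.add_apply]
  congr 1
  zify [hr]
  ring

theorem two_mul_lt_sum_chainExponent_div [Fintype ι] (h : 2 * (m + 1) ≤ Fintype.card ι * m)
    (i₀ : ι) (k : ℕ) : 2 * k < ∑ i, chainExponent m i₀ (k + 1) i / (m + 1) := by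
  obtain ⟨c, r, hr, rfl⟩ : ∃ c r, r ≤ m ∧ k = (m + 1) * c + r :=
    ⟨k / (m + 1), k % (m + 1), Nat.lt_succ_iff.mp (Nat.mod_lt _ m.succ_pos),
      (Nat.div_add_mod _ _).symm⟩
  have hcard : 3 ≤ Fintype.card ι := by
    by_contra! hlt
    have := Nat.mul_le_mul_right m (Nat.lt_succ_iff.mp hlt)
    lia
  have hc := Nat.mul_le_mul_right c h
  simp only [chainExponent_succ_div i₀ _ hr, Finset.sum_add_distrib, Finset.sum_const,
    Finset.card_univ, smul_eq_mul]
  obtain rfl | hr₀ := Nat.eq_zero_or_pos r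
  · have hi₀ := Finset.single_le_sum_of_canonicallyOrdered
      (f := fun i => (m - 0 + (Pi.single i₀ 1 : ι → ℕ) i) / (m + 1)) (Finset.mem_univ i₀)
    simp only [Nat.sub_zero, Pi.single_eq_same, Nat.div_self m.succ_pos] at hi₀
    simp only [Nat.sub_zero]
    linarith
  · have hr₃ := Nat.mul_le_mul_right r hcard
    refine lt_of_lt_of_le ?_ (Nat.le_add_right _ _)
    linarith

end ChainExponent

section NotFinitelyGenerated

variable {ι K : Type*} [Fintype ι] [Field K] [CharZero K] {m : ℕ}

theorem exists_seq_diagonalDerivation_eq [DecidableEq ι] (h : 2 * (m + 1) ≤ Fintype.card ι * m)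
    (i₀ : ι) : ∃ b : ℕ → MvPolynomial ι K, b 0 = 1 ∧
      (∀ k, b k ∈ boxHomogeneous K (fun i => chainExponent m i₀ k i / (m + 1)) k) ∧
      ∀ k, diagonalDerivation ι K (b (k + 1)) = b k := by
  have hmono (k : ℕ) : (fun i => chainExponent m i₀ k i / (m + 1)) ≤
      fun i => chainExponent m i₀ (k + 1) i / (m + 1) := fun i => by
    rw [chainExponent_succ]
    exact Nat.div_le_div_right (Nat.le_add_right _ _)
  exact exists_seq_preimage (E := diagonalDerivation ι K)
    (W := fun k => SetLike.coe (boxHomogeneous K (fun i => chainExponent m i₀ k i / (m + 1)) k))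
    (one_mem_boxHomogeneous _) fun k f hf =>
      exists_diagonalDerivation_eq (two_mul_lt_sum_chainExponent_div h i₀ k)
        (boxHomogeneous_mono (hmono k) k hf)

theorem exists_robertsDerivation_eq_zero [DecidableEq ι] (h : 2 * (m + 1) ≤ Fintype.card ι * m)
    (i₀ : ι) (n : ℕ) : ∃ f : MvPolynomial (RobertsVar ι) K, robertsDerivation ι K m f = 0 ∧
      restrictLine K i₀ f = TrivSqZeroExt.inr (Polynomial.X ^ n) := by
  obtain ⟨b, hb₀, hb, hbD⟩ := exists_seq_diagonalDerivation_eq (K := K) h i₀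
  let F (k : ℕ) := homogenize K m (chainExponent m i₀ k) (b k)
  have hb' (k : ℕ) := boxHomogeneous_div_le_restrictSupport m _ k (hb k)
  have hF₀ : F 0 = X (.x i₀) := by
    simp only [F, hb₀, homogenize_one, chainExponent_zero, xMonomial_single, pow_one]
  have hD₀ : robertsDerivation ι K m (F 0) = 0 := by
    rw [hF₀, robertsDerivation_X, robertsField]
  have hDF (k : ℕ) : robertsDerivation ι K m (F (k + 1)) =
      robertsDerivation ι K m (X .v) * F k := by
    rw [robertsDerivation_homogenize (hb' (k + 1)), hbD, chainExponent_succ,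
      homogenize_add (hb' k), robertsDerivation_X, robertsField]
  refine ⟨_, derivation_sum_descFactorial_eq_zero _ hD₀ hDF n, ?_⟩
  rw [Finset.sum_range_succ', map_add, map_sum, Finset.sum_eq_zero, zero_add, hF₀]
  · have hx : restrictLine K i₀ (X (.x i₀)) = DualNumber.eps := by simp [restrictLine]
    have hv : restrictLine K i₀ (X .v) = TrivSqZeroExt.inl Polynomial.X := by simp [restrictLine]
    simp only [map_mul, map_pow, pow_zero, Nat.descFactorial_zero,
      Nat.cast_one, one_mul, Nat.sub_zero, hx, hv]
    rw [TrivSqZeroExt.inl_pow, TrivSqZeroExt.inl_mul_eq_smul, DualNumber.inr_eq_smul_eps]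
  · intro k _
    have hb₀ : constantCoeff (b (k + 1)) = 0 :=
      (isHomogeneous_of_mem_boxHomogeneous (hb (k + 1))).coeff_eq_zero (by simp)
    rw [map_mul, restrictLine_homogenize, hb₀, zero_smul, mul_zero]

variable (K ι) in
theorem roberts_invariant_algebra_not_finitely_generated_general
    (h : 2 * (m + 1) ≤ Fintype.card ι * m) :
    ¬ (translationInvariants (robertsField ι K m)).FG := by
  classical
  intro hFG
  obtain ⟨i₀⟩ : Nonempty ι := by
    by_contra! hι
    simp at h
  have hmem (f : MvPolynomial (RobertsVar ι) K) :
      f ∈ translationInvariants (robertsField ι K m) ↔ robertsDerivation ι K m f = 0 :=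
    mem_translationInvariants_iff_mkDerivation_eq_zero (robertsField_mem_translationInvariants m)
  obtain ⟨N, hN⟩ := exists_natDegree_snd_le_of_fg (hFG.map (restrictLine K i₀)) <| by
    rintro _ ⟨f, hf, rfl⟩
    exact natDegree_fst_restrictLine i₀ ((hmem f).mp hf)
  obtain ⟨f, hf, hfN⟩ := exists_robertsDerivation_eq_zero (K := K) h i₀ (N + 1)
  have hdeg := hN _ ⟨f, (hmem f).mpr hf, hfN⟩
  rw [TrivSqZeroExt.snd_inr, Polynomial.natDegree_X_pow] at hdeg
  exact absurd hdeg N.not_succ_le_self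

end NotFinitelyGenerated

section Transport

/-- Roberts' names for the seven variables of `robertsRho`. -/
def robertsVarEquiv : RobertsVar (Fin 3) ≃ Fin 7 where
  toFun
    | .x i => ![0, 1, 2] i
    | .s i => ![3, 4, 5] i
    | .v => 6
  invFun := ![.x 0, .x 1, .x 2, .s 0, .s 1, .s 2, .v]
  left_inv := by decide
  right_inv := by decide

theorem robertsRho_rename (m : ℕ) (l : ℂ) (f : MvPolynomial (RobertsVar (Fin 3)) ℂ) :
    robertsRho m l (rename robertsVarEquiv f) =
      rename robertsVarEquiv (translation (robertsField (Fin 3) ℂ m) l f) := by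
  have h : (robertsRho m l).comp (rename robertsVarEquiv) =
      (rename robertsVarEquiv).comp (translation (robertsField (Fin 3) ℂ m) l) := by
    refine algHom_ext fun j => ?_
    rcases j with i | i | _
    · fin_cases i <;> simp [robertsRho, translation, robertsField, robertsVarEquiv]
    · fin_cases i <;> simp [robertsRho, translation, robertsField, robertsVarEquiv]
    · simp [robertsRho, translation, robertsField, robertsVarEquiv, xMonomial, Fin.prod_univ_three,
        mul_assoc]
  exact DFunLike.congr_fun h f

theorem mem_map_rename_translationInvariants {m : ℕ} {f : MvPolynomial (Fin 7) ℂ} :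
    f ∈ (translationInvariants (robertsField (Fin 3) ℂ m)).map (rename robertsVarEquiv) ↔
      ∀ l, robertsRho m l f = f := by
  obtain ⟨g, rfl⟩ := rename_surjective robertsVarEquiv robertsVarEquiv.surjective f
  have hinj := rename_injective (R := ℂ) robertsVarEquiv robertsVarEquiv.injective
  simp only [robertsRho_rename, hinj.eq_iff, Subalgebra.mem_map, exists_eq_right,
    mem_translationInvariants]

end Transport

/-- **Roberts' algebra is not finitely generated:** for `m ≥ 2`, there is no finite
set `S` of invariants of the action `ρ` generating all invariants as a `ℂ`-algebra. -/
theorem roberts_invariant_algebra_not_finitely_generated (m : ℕ) (hm : 2 ≤ m) :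
    ¬ ∃ S : Finset (MvPolynomial (Fin 7) ℂ),
      (∀ f ∈ S, ∀ l : ℂ, robertsRho m l f = f) ∧
      (∀ f : MvPolynomial (Fin 7) ℂ, (∀ l : ℂ, robertsRho m l f = f) →
        f ∈ Algebra.adjoin ℂ (S : Set (MvPolynomial (Fin 7) ℂ))) := by
  rintro ⟨S, hS, hgen⟩
  have hcard : 2 * (m + 1) ≤ Fintype.card (Fin 3) * m := by
    rw [Fintype.card_fin]
    lia
  refine roberts_invariant_algebra_not_finitely_generated_general (Fin 3) ℂ hcard ?_
  refine Subalgebra.fg_of_fg_map _ _ (rename_injective _ robertsVarEquiv.injective)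
    ⟨S, le_antisymm (Algebra.adjoin_le fun f hf => ?_) fun f hf => ?_⟩
  · exact mem_map_rename_translationInvariants.mpr (hS f hf)
  · exact hgen f (mem_map_rename_translationInvariants.mp hf)
end
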